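/- arXiv:1810.12433 — 3 statements merged into one kernel-verified Lean document; each statement's English description precedes it below -/
import Mathlib

section
/- For every ε > 0 there exists C > 0 such that, whenever p ≥ C log n / n and n is even, the binomial random graph G_{n,p} asymptotically almost surely is (ε,ε)-Chvátal-resilient with respect to containing a perfect matching; that is, a.a.s. for every subgraph H ∈ H^{ε,ε}_{n,p}(G_{n,p}), the graph G_{n,p} ∖ H contains a perfect matching. -/
/-!
The theorem follows from Tutte's theorem together with a single pseudorandomness property of
`G = G_{n,p}`, called `Expands`: every nonempty `X` sends at least `p|X||Z| - γnp|X|` edges to every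
disjoint `Z` with `|V ∖ Z| ≤ K|X|`. By the lower-tail Chernoff bound a pair `(X, Z)` fails with
probability at most `exp(-γ²np|X|/4)`. As `np ≥ C log n` with `C` large in terms of `γ` and `K`,
this beats the number of pairs, so the property holds asymptotically almost surely
(`Pr_not_expands`).

Let `H ≤ G` be in the Chvátal family. If `G ∖ H` has no edges between `X` and `Z`, then `H` contains
all edges of `G` between them, so all but few vertices of `X` have `H`-degree nearly `p|Z|`
(`exists_deg_ge`, `card_low_deg_lt`). Suppose that deleting `U` from `G ∖ H` leaves more than `|U|`
odd components.

* If `|U| ≤ εn/2`, splitting the components into two families gives sides `X`, `Z` without edges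
  between them, with `|X| ≤ |Z|` and `|U| ≤ 2|X|`. Most of `X` has `H`-degree about `p(n - |X|)`
  and most of `Z` at least about `p|X|`. This violates the Chvátal condition at `i = 1` when `X` is
  small and at `i ≈ |X|` otherwise (`no_sparse_cut`). For `U = ∅` two components exist because `n`
  is even.
* If `|U| > εn/2`, all but `n/A` of the components have at most `A` vertices, so their union `S` has
  at least about `|U|` vertices. Most vertices of `S` have `H`-degree about `p(n - |U|)`, and most
  vertices outside `U` and `S` have `H`-degree at least about `p|S|`, hence about `p|U|` or more.
  This violates the Chvátal condition at `i ≈ |U|` (`no_large_violator`).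
-/

open Filter Real

namespace Resilience

variable {V : Type*}

/-- The degree of a vertex, as the cardinality of its neighbourhood. -/
noncomputable def deg (G : SimpleGraph V) (v : V) : ℕ := (G.neighborSet v).ncard

/-- The neighbourhood of a set of vertices: all vertices with a neighbour in `X`. -/
def nbhd (G : SimpleGraph V) (X : Set V) : Set V := {v | ∃ x ∈ X, G.Adj v x}

/-- The minimum degree over a set of vertices. -/
noncomputable def minDeg (G : SimpleGraph V) (X : Set V) : ℕ :=
  sInf ((fun v => deg G v) '' X)

/-- The number of edges of `G` with one endpoint in `X` and the other in `Y`. -/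
noncomputable def eBetween (G : SimpleGraph V) (X Y : Set V) : ℕ :=
  {e ∈ G.edgeSet | ∃ x ∈ X, ∃ y ∈ Y, e = s(x, y)}.ncard

/-- The number of edges of `G` with both endpoints in `A`. -/
noncomputable def eIn (G : SimpleGraph V) (A : Set V) : ℕ :=
  {e ∈ G.edgeSet | ∀ v ∈ e, v ∈ A}.ncard

/-- The graph on `V` whose edges are the consecutive pairs of the list `l`;
this lets us view a path, recorded as a list of distinct vertices, as a graph. -/
def listGraph (l : List V) : SimpleGraph V :=
  SimpleGraph.fromEdgeSet {e | ∃ q ∈ l.zip l.tail, e = s(q.1, q.2)}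

/-- `l` is a (nonempty) path on `V` all of whose edges lie in `G`. -/
def IsPathOn (G : SimpleGraph V) (l : List V) : Prop :=
  l ≠ [] ∧ l.Nodup ∧ l.Chain' G.Adj

/-- `l` is a longest path with all edges in `G`. -/
def IsLongestPathOn (G : SimpleGraph V) (l : List V) : Prop :=
  IsPathOn G l ∧ ∀ l' : List V, IsPathOn G l' → l'.length ≤ l.length

/-- `l'` is obtained from the path `l` (with fixed last endpoint) by a single rotation
within `G`, whose broken edge lies on the original path `P`.  Writing
`l = a :: t₁ ++ c :: b :: t₂`, the pivot is `b`, the new edge is `ab ∈ G`, the broken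
edge is `cb` (an edge of `P`), and the rotated path is `(a :: t₁ ++ [c]).reverse ++ b :: t₂`. -/
def IsRotation (G : SimpleGraph V) (P l l' : List V) : Prop :=
  ∃ (a c b : V) (t₁ t₂ : List V),
    l = a :: t₁ ++ c :: b :: t₂ ∧ G.Adj a b ∧ (listGraph P).Adj c b ∧
    l' = (a :: t₁ ++ [c]).reverse ++ b :: t₂

/-- The set of paths obtainable from `P` by at most `t` successive rotations within `G`
with fixed last endpoint, all broken edges lying on `P`. -/
def rotSet (G : SimpleGraph V) (P : List V) : ℕ → Set (List V)
  | 0 => {P}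
  | t + 1 => rotSet G P t ∪ {l' | ∃ l ∈ rotSet G P t, IsRotation G P l l'}

/-- `R^t_{G,P,u}`: the set of endpoints of paths obtainable from `P` by at most `t`
successive rotations within `G` with fixed last endpoint. -/
def Rset (G : SimpleGraph V) (P : List V) (t : ℕ) : Set V :=
  {x | ∃ l ∈ rotSet G P t, l.head? = some x}

/-- The family `H^ε_{n,p}` of Pósa-type subgraphs: there is an ordering of the vertices
with non-increasing degrees such that `d_H(v_i) ≤ (n-i)p - εnp` for all `i < n/2`
(1-based indexing). -/
def PosaFamily (n : ℕ) (p ε : ℝ) (H : SimpleGraph (Fin n)) : Prop :=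
  ∃ v : Fin n → Fin n, Function.Bijective v ∧
    (∀ i j : Fin n, i ≤ j → deg H (v j) ≤ deg H (v i)) ∧
    ∀ i : Fin n, ((i.1 : ℝ) + 1) < n / 2 →
      (deg H (v i) : ℝ) ≤ ((n : ℝ) - ((i.1 : ℝ) + 1)) * p - ε * n * p

/-- The family `H^{ε,δ}_{n,p}` of (shifted) Chvátal-type subgraphs, where the shift
`δn` is recorded as a natural number `s`: there is an ordering of the vertices with
non-increasing degrees such that for all `i < n/2` (1-based indexing), either
`d_H(v_i) ≤ (n-i)p - εnp` or `d_H(v_{n-i-s}) ≤ ip - εnp`. -/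
def ChvatalFamily (n : ℕ) (p ε : ℝ) (s : ℕ) (H : SimpleGraph (Fin n)) : Prop :=
  ∃ v : Fin n → Fin n, Function.Bijective v ∧
    (∀ i j : Fin n, i ≤ j → deg H (v j) ≤ deg H (v i)) ∧
    ∀ i : Fin n, ((i.1 : ℝ) + 1) < n / 2 →
      ((deg H (v i) : ℝ) ≤ ((n : ℝ) - ((i.1 : ℝ) + 1)) * p - ε * n * p ∨
       (deg H (v ⟨n - (i.1 + 1) - s - 1, by have := i.2; omega⟩) : ℝ) ≤
         ((i.1 : ℝ) + 1) * p - ε * n * p)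

/-- The probability weight of a fixed graph `G` in the binomial random graph `G_{n,p}`. -/
noncomputable def weight (n : ℕ) (p : ℝ) (G : SimpleGraph (Fin n)) : ℝ :=
  p ^ G.edgeSet.ncard * (1 - p) ^ (n.choose 2 - G.edgeSet.ncard)

open Classical in
/-- The probability that the binomial random graph `G_{n,p}` satisfies the property `Q`. -/
noncomputable def Pr (n : ℕ) (p : ℝ) (Q : SimpleGraph (Fin n) → Prop) : ℝ :=
  ∑ G : SimpleGraph (Fin n), if Q G then weight n p G else 0

/-- Property `RE(δ)` for a (connected) graph `G` on `n` vertices: for every path `P`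
on the vertex set, either `G ∪ P` has a longer path, or there are at least `δn` vertices
`v`, each with a set `T v` of at least `δn` vertices `w`, such that `G ∪ P` has a path
from `v` to `w` with the same vertex set as `P`. -/
def RE (n : ℕ) (δ : ℝ) (G : SimpleGraph (Fin n)) : Prop :=
  G.Connected ∧
  ∀ P : List (Fin n), P ≠ [] → P.Nodup →
    (∃ Q : List (Fin n), IsPathOn (G ⊔ listGraph P) Q ∧ P.length < Q.length) ∨
    (∃ S : Set (Fin n), δ * n ≤ S.ncard ∧
      ∃ T : Fin n → Set (Fin n), (∀ v ∈ S, δ * n ≤ (T v).ncard) ∧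
        ∀ v ∈ S, ∀ w ∈ T v, ∃ Q : List (Fin n),
          IsPathOn (G ⊔ listGraph P) Q ∧ Q.head? = some v ∧ Q.getLast? = some w ∧
          Q.toFinset = P.toFinset)

/-- `G₂` complements `G₁` (with respect to parameter `δ` as in `RE(δ)`): for every path
`P` on the vertex set, either `G₁ ∪ P` has a longer path, or there are sets `S`, `T v`
as in the definition of `RE(δ)` together with `v ∈ S` and `w ∈ T v` such that `vw` is an
edge of `G₁ ∪ G₂`. -/
def Complements (n : ℕ) (δ : ℝ) (G₁ G₂ : SimpleGraph (Fin n)) : Prop :=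
  ∀ P : List (Fin n), P ≠ [] → P.Nodup →
    (∃ Q : List (Fin n), IsPathOn (G₁ ⊔ listGraph P) Q ∧ P.length < Q.length) ∨
    (∃ S : Set (Fin n), δ * n ≤ S.ncard ∧
      ∃ T : Fin n → Set (Fin n), (∀ v ∈ S, δ * n ≤ (T v).ncard) ∧
        (∀ v ∈ S, ∀ w ∈ T v, ∃ Q : List (Fin n),
          IsPathOn (G₁ ⊔ listGraph P) Q ∧ Q.head? = some v ∧ Q.getLast? = some w ∧
          Q.toFinset = P.toFinset) ∧
        ∃ v ∈ S, ∃ w ∈ T v, (G₁ ⊔ G₂).Adj v w)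


/-! ### Expansion of the random graph -/

open Classical in
/-- The probability generating function of the number of edges that `G_{n,p}` has inside a fixed
set `E₀` of pairs: each pair contributes an independent factor `pq + (1 - p)`. -/
lemma sum_weight_mul_pow (n : ℕ) (p q : ℝ) (E₀ : Finset (Sym2 (Fin n)))
    (hE₀ : ∀ e ∈ E₀, ¬ e.IsDiag) :
    ∑ G : SimpleGraph (Fin n), weight n p G * q ^ (E₀.filter (· ∈ G.edgeSet)).card
      = (p * q + (1 - p)) ^ E₀.card := by
  set E : Finset (Sym2 (Fin n)) := Finset.univ.filter (fun e => ¬ e.IsDiag) with hE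
  have hEcard : E.card = n.choose 2 := by
    rw [hE, ← Fintype.card_subtype, Sym2.card_subtype_not_diag, Fintype.card_fin]
  have hsub : E₀ ⊆ E := fun e he => by simp [hE, hE₀ e he]
  have h1 : ∏ e ∈ E, (p * (if e ∈ E₀ then q else 1) + (1 - p))
      = (p * q + (1 - p)) ^ E₀.card := by
    rw [← Finset.prod_subset hsub, ← Finset.prod_const]
    · exact Finset.prod_congr rfl fun e he => by simp [he]
    · intro e _ he; simp [he]
  rw [← h1, Finset.prod_add]
  refine Finset.sum_bij' (fun G _ => Finset.univ.filter (· ∈ G.edgeSet))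
    (fun t _ => SimpleGraph.fromEdgeSet (t : Set (Sym2 (Fin n)))) ?_ ?_ ?_ ?_ ?_
  · intro G _
    simp only [Finset.mem_powerset]
    intro e he
    simp only [Finset.mem_filter, Finset.mem_univ, true_and, hE] at he ⊢
    exact G.not_isDiag_of_mem_edgeSet he
  · intro t _; simp
  · intro G _
    simp
  · intro t ht
    ext e
    have : e ∈ t → ¬ e.IsDiag := fun he => by
      have := (Finset.mem_powerset.1 ht) he
      simpa [hE] using this
    simp [SimpleGraph.edgeSet_fromEdgeSet]
    exact this
  · intro G _
    have hle : Finset.univ.filter (· ∈ G.edgeSet) ⊆ E := by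
      intro e he
      simp only [Finset.mem_filter, Finset.mem_univ, true_and, hE] at he ⊢
      exact G.not_isDiag_of_mem_edgeSet he
    have hc : (Finset.univ.filter (· ∈ G.edgeSet)).card = G.edgeSet.ncard := by
      rw [← Set.ncard_coe_finset]; congr 1; ext; simp
    rw [Finset.prod_mul_distrib, Finset.prod_const, Finset.prod_const,
      Finset.card_sdiff_of_subset hle, hEcard, hc, weight,
      Finset.prod_ite, Finset.prod_const, Finset.prod_const_one, mul_one]
    have : (E₀.filter (· ∈ G.edgeSet)) =
        (Finset.univ.filter (· ∈ G.edgeSet)).filter (· ∈ E₀) := by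
      ext; simp [and_comm]
    rw [this]; ring

lemma weight_nonneg {n : ℕ} {p : ℝ} (h0 : 0 ≤ p) (h1 : p ≤ 1) (G : SimpleGraph (Fin n)) :
    0 ≤ weight n p G :=
  mul_nonneg (pow_nonneg h0 _) (pow_nonneg (by linarith) _)

lemma sum_weight (n : ℕ) (p : ℝ) : ∑ G : SimpleGraph (Fin n), weight n p G = 1 := by
  simpa using sum_weight_mul_pow n p 1 ∅ (by simp)

lemma Pr_not (n : ℕ) (p : ℝ) (Q : SimpleGraph (Fin n) → Prop) :
    Pr n p Q = 1 - Pr n p (fun G => ¬ Q G) := by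
  classical
  rw [← sum_weight n p, Pr, Pr, ← Finset.sum_sub_distrib]
  refine Finset.sum_congr rfl fun G _ => ?_
  by_cases h : Q G <;> simp [h]

lemma Pr_mono {n : ℕ} {p : ℝ} (h0 : 0 ≤ p) (h1 : p ≤ 1) {Q R : SimpleGraph (Fin n) → Prop}
    (h : ∀ G, Q G → R G) : Pr n p Q ≤ Pr n p R := by
  classical
  refine Finset.sum_le_sum fun G _ => ?_
  by_cases hQ : Q G
  · simp [hQ, h G hQ]
  · by_cases hR : R G <;> simp [hQ, hR, weight_nonneg h0 h1 G]

lemma Pr_exists_le {n : ℕ} {p : ℝ} (h0 : 0 ≤ p) (h1 : p ≤ 1) {ι : Type*} (s : Finset ι)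
    (Q : ι → SimpleGraph (Fin n) → Prop) :
    Pr n p (fun G => ∃ i ∈ s, Q i G) ≤ ∑ i ∈ s, Pr n p (Q i) := by
  classical
  unfold Pr
  rw [Finset.sum_comm]
  refine Finset.sum_le_sum fun G _ => ?_
  have hnn : ∀ i ∈ s, 0 ≤ (if Q i G then weight n p G else 0) := fun i _ => by
    split_ifs
    · exact weight_nonneg h0 h1 G
    · exact le_rfl
  by_cases h : ∃ i ∈ s, Q i G
  · obtain ⟨i, hi, hQ⟩ := h
    rw [if_pos ⟨i, hi, hQ⟩]
    refine le_trans ?_ (Finset.single_le_sum hnn hi)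
    rw [if_pos hQ]
  · rw [if_neg h]; exact Finset.sum_nonneg hnn

open Classical in
/-- Lower-tail Chernoff bound for the number of edges of `G_{n,p}` inside a fixed set `E₀` of
pairs, with the exponential-moment parameter `l` left free. -/
lemma Pr_lower_tail {n : ℕ} {p : ℝ} (h0 : 0 ≤ p) (h1 : p ≤ 1) (E₀ : Finset (Sym2 (Fin n)))
    (hE₀ : ∀ e ∈ E₀, ¬ e.IsDiag) (l t : ℝ) (hl : 0 ≤ l) :
    Pr n p (fun G => ((E₀.filter (· ∈ G.edgeSet)).card : ℝ) < p * E₀.card - t)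
      ≤ Real.exp (p * E₀.card * l ^ 2 - l * t) := by
  have hstep : Pr n p (fun G => ((E₀.filter (· ∈ G.edgeSet)).card : ℝ) < p * E₀.card - t)
      ≤ Real.exp (l * (p * E₀.card - t)) * (p * Real.exp (-l) + (1 - p)) ^ E₀.card := by
    rw [← sum_weight_mul_pow n p _ E₀ hE₀, Finset.mul_sum]
    refine Finset.sum_le_sum fun G _ => ?_
    have hw := weight_nonneg h0 h1 G
    split_ifs with h
    · have : Real.exp (l * (p * E₀.card - t)) *
          (weight n p G * Real.exp (-l) ^ (E₀.filter (· ∈ G.edgeSet)).card) =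
          weight n p G * Real.exp (l * ((p * E₀.card - t) -
            (E₀.filter (· ∈ G.edgeSet)).card)) := by
        rw [← Real.exp_nat_mul, mul_left_comm, ← Real.exp_add]; ring_nf
      rw [this]
      refine le_mul_of_one_le_right hw (Real.one_le_exp (mul_nonneg hl (by linarith)))
    · positivity
  refine hstep.trans ?_
  -- `e^{-l} ≤ 1/(1+l) ≤ 1 - l + l²` for `l ≥ 0`
  have hexp : Real.exp (-l) ≤ 1 - l + l ^ 2 := by
    have h2 := Real.add_one_le_exp l
    rw [Real.exp_neg]
    rw [inv_le_iff_one_le_mul₀ (Real.exp_pos l)]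
    nlinarith [pow_nonneg hl 3, sq_nonneg (l - 1), mul_nonneg (by nlinarith : 0 ≤ 1 - l + l ^ 2)
      (sub_nonneg.2 h2)]
  have hb : p * Real.exp (-l) + (1 - p) ≤ Real.exp (p * (l ^ 2 - l)) := by
    have := Real.add_one_le_exp (p * (l ^ 2 - l))
    nlinarith [mul_le_mul_of_nonneg_left hexp h0]
  have hb0 : 0 ≤ p * Real.exp (-l) + (1 - p) := by
    have := mul_nonneg h0 (Real.exp_pos (-l)).le
    linarith
  calc _ ≤ Real.exp (l * (p * E₀.card - t)) * Real.exp (p * (l ^ 2 - l)) ^ E₀.card := by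
        gcongr
    _ = _ := by rw [← Real.exp_nat_mul, ← Real.exp_add]; ring_nf

open Classical in
/-- The one-sided pseudorandomness used on the random graph: every nonempty `X` sends almost the
expected number of edges to every disjoint `Z` that misses at most `K|X|` vertices. -/
def Expands (n : ℕ) (p γ K : ℝ) (G : SimpleGraph (Fin n)) : Prop :=
  ∀ X Z : Finset (Fin n), X.Nonempty → Disjoint X Z → (n : ℝ) - Z.card ≤ K * X.card →
    p * (X.card * Z.card) - γ * n * p * X.card ≤ ((G.interedges X Z).card : ℝ)

open Classical in
lemma Pr_interedges {n : ℕ} {p γ : ℝ} (h0 : 0 ≤ p) (h1 : p ≤ 1) (hγ : 0 ≤ γ)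
    (X Z : Finset (Fin n)) (hXZ : Disjoint X Z) :
    Pr n p (fun G => ((G.interedges X Z).card : ℝ) <
        p * (X.card * Z.card) - γ * n * p * X.card)
      ≤ Real.exp (-(γ ^ 2 / 4 * (n * p) * X.card)) := by
  have hne : ∀ x ∈ X, ∀ z ∈ Z, x ≠ z := fun x hx z hz h =>
    Finset.disjoint_left.1 hXZ hx (h ▸ hz)
  have hinj : Set.InjOn (fun q : Fin n × Fin n => s(q.1, q.2)) (X ×ˢ Z : Finset _) := by
    rintro ⟨a, b⟩ hab ⟨c, d⟩ hcd h
    simp only [Finset.coe_product, Set.mem_prod, Finset.mem_coe] at hab hcd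
    rcases Sym2.eq_iff.1 h with ⟨h, h'⟩ | ⟨h, h'⟩
    · simp_all
    · exact absurd h (hne a hab.1 d hcd.2)
  set E₀ := (X ×ˢ Z).image (fun q : Fin n × Fin n => s(q.1, q.2)) with hE
  have hcard : E₀.card = X.card * Z.card := by
    rw [hE, Finset.card_image_of_injOn hinj, Finset.card_product]
  have hdiag : ∀ e ∈ E₀, ¬ e.IsDiag := by
    intro e he
    simp only [hE, Finset.mem_image, Finset.mem_product] at he
    obtain ⟨q, hq, rfl⟩ := he
    simpa using hne _ hq.1 _ hq.2
  have hcount : ∀ G : SimpleGraph (Fin n),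
      (E₀.filter (· ∈ G.edgeSet)).card = (G.interedges X Z).card := by
    intro G
    rw [hE, Finset.filter_image, Finset.card_image_of_injOn]
    · congr 1
    · exact hinj.mono (by exact_mod_cast Finset.filter_subset _ _)
  have key := Pr_lower_tail h0 h1 E₀ hdiag (γ / 2) (γ * n * p * X.card) (by positivity)
  simp only [hcount, hcard, Nat.cast_mul] at key
  refine key.trans (Real.exp_le_exp.2 ?_)
  have hZ : (Z.card : ℝ) ≤ n := by
    exact_mod_cast (Finset.card_le_univ Z).trans (by simp)
  have : 0 ≤ p * X.card * (γ ^ 2 / 4) * (n - Z.card) := by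
    have : (0 : ℝ) ≤ n - Z.card := by linarith
    positivity
  nlinarith

/-- `G_{n,p}` expands asymptotically almost surely. With `np ≥ C log n` a pair `(X, Z)` fails with
probability at most `n^{-2|X|} n^{-2|V ∖ Z|}`, and these bounds sum to
`((1 + n⁻²)ⁿ - 1)(1 + n⁻²)ⁿ`. -/
lemma Pr_not_expands {n : ℕ} (hn : 1 ≤ n) {p γ K C : ℝ} (h1 : p ≤ 1) (hγ : 0 ≤ γ)
    (hC0 : 0 ≤ C) (hC : 2 + 2 * K ≤ γ ^ 2 / 4 * C) (hp : C * Real.log n / n ≤ p) :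
    Pr n p (fun G => ¬ Expands n p γ K G)
      ≤ (Real.exp (1 / n) - 1) * Real.exp (1 / n) := by
  classical
  have hn0 : (0 : ℝ) < n := by exact_mod_cast hn
  have hlog : 0 ≤ Real.log n := Real.log_natCast_nonneg n
  have h0 : 0 ≤ p := le_trans (by positivity) hp
  have hnp : C * Real.log n ≤ n * p := by
    rw [div_le_iff₀ hn0] at hp; linarith
  set a : ℝ := ((n : ℝ) ^ 2)⁻¹ with ha
  have hapos : 0 < a := by positivity
  have hae : a = Real.exp (-(2 * Real.log n)) := by
    rw [Real.exp_neg, ha, two_mul, Real.exp_add, Real.exp_log hn0, sq]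
  set I : Finset (Finset (Fin n) × Finset (Fin n)) :=
    Finset.univ.filter (fun q => q.1.Nonempty ∧ Disjoint q.1 q.2ᶜ ∧
      (q.2.card : ℝ) ≤ K * q.1.card) with hI
  calc Pr n p (fun G => ¬ Expands n p γ K G)
      ≤ Pr n p (fun G => ∃ q ∈ I, ((G.interedges q.1 q.2ᶜ).card : ℝ) <
          p * (q.1.card * q.2ᶜ.card) - γ * n * p * q.1.card) := by
        refine Pr_mono h0 h1 fun G hG => ?_
        unfold Expands at hG
        push Not at hG
        obtain ⟨X, Z, hX, hd, hK, h⟩ := hG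
        refine ⟨(X, Zᶜ), ?_, by simpa using h⟩
        simp only [hI, Finset.mem_filter, Finset.mem_univ, true_and, compl_compl]
        refine ⟨hX, hd, ?_⟩
        rw [Finset.card_compl, Fintype.card_fin, Nat.cast_sub]
        · exact hK
        · exact (Finset.card_le_univ Z).trans (by simp)
    _ ≤ ∑ q ∈ I, Pr n p (fun G => ((G.interedges q.1 q.2ᶜ).card : ℝ) <
          p * (q.1.card * q.2ᶜ.card) - γ * n * p * q.1.card) := Pr_exists_le h0 h1 _ _
    _ ≤ ∑ q ∈ I, a ^ q.1.card * a ^ q.2.card := by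
        refine Finset.sum_le_sum fun q hq => ?_
        simp only [hI, Finset.mem_filter, Finset.mem_univ, true_and] at hq
        obtain ⟨-, hd, hK⟩ := hq
        refine (Pr_interedges h0 h1 hγ q.1 q.2ᶜ hd).trans ?_
        rw [hae, ← Real.exp_nat_mul, ← Real.exp_nat_mul, ← Real.exp_add]
        refine Real.exp_le_exp.2 ?_
        have e1 : γ ^ 2 / 4 * (C * Real.log n) * q.1.card ≤ γ ^ 2 / 4 * (n * p) * q.1.card := by
          gcongr
        have e2 : (2 + 2 * K) * (Real.log n * q.1.card)
            ≤ γ ^ 2 / 4 * C * (Real.log n * q.1.card) :=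
          mul_le_mul_of_nonneg_right hC (by positivity)
        have e3 := mul_le_mul_of_nonneg_left hK hlog
        nlinarith
    _ ≤ ∑ q ∈ (Finset.univ.erase (∅ : Finset (Fin n))) ×ˢ (Finset.univ : Finset (Finset (Fin n))),
          a ^ q.1.card * a ^ q.2.card := by
        refine Finset.sum_le_sum_of_subset_of_nonneg ?_ fun _ _ _ => by positivity
        intro q hq
        simp only [hI, Finset.mem_filter, Finset.mem_univ, true_and] at hq
        simp [hq.1.ne_empty]
    _ = ((1 + a) ^ n - 1) * (1 + a) ^ n := by
        have hs : ∑ X : Finset (Fin n), a ^ X.card = (1 + a) ^ n := by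
          have := Fin.sum_pow_mul_eq_add_pow (n := n) a 1
          simpa [add_comm] using this
        rw [Finset.sum_product]
        dsimp only
        rw [← Finset.sum_mul_sum, hs]
        congr 1
        rw [← hs, ← Finset.add_sum_erase _ _ (Finset.mem_univ (∅ : Finset (Fin n)))]
        simp
    _ ≤ _ := by
        have hb : (1 + a) ^ n ≤ Real.exp (1 / n) := by
          have : 1 + a ≤ Real.exp a := by linarith [Real.add_one_le_exp a]
          calc (1 + a) ^ n ≤ Real.exp a ^ n := by gcongr
            _ = Real.exp (1 / n) := by
              rw [← Real.exp_nat_mul, ha]; congr 1; field_simp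
        have h1a : 1 ≤ (1 + a) ^ n := one_le_pow₀ (by linarith)
        exact mul_le_mul (by linarith) hb (by linarith) (by linarith)

/-! ### High degrees of `H` across missing edges, and the Chvátal condition -/

/-- If `G ∖ H` has no edge between `X` and `Z`, then `H` contains all the edges of `G` between
them, so some vertex of `X` has `H`-degree close to `p|Z|`. -/
lemma exists_deg_ge {n : ℕ} {p γ K : ℝ} {G H : SimpleGraph (Fin n)} (hG : Expands n p γ K G)
    {X Z : Finset (Fin n)} (hX : X.Nonempty) (hXZ : Disjoint X Z)
    (hK : (n : ℝ) - Z.card ≤ K * X.card)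
    (hadj : ∀ x ∈ X, ∀ z ∈ Z, ¬ (G \ H).Adj x z) :
    ∃ x ∈ X, p * (Z.card - γ * n) ≤ deg H x := by
  classical
  by_contra! hcon
  have h1 := hG X Z hX hXZ hK
  have h2 : (G.interedges X Z).card ≤ ∑ x ∈ X, deg H x := by
    have hfib : (G.interedges X Z).card
        = ∑ x ∈ X, ((G.interedges X Z).filter (fun q => q.1 = x)).card :=
      Finset.card_eq_sum_card_fiberwise fun q hq => (Rel.mem_interedges_iff.1 hq).1
    rw [hfib]
    refine Finset.sum_le_sum fun x hx => ?_
    rw [deg, ← Set.ncard_coe_finset]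
    refine Set.ncard_le_ncard_of_injOn Prod.snd ?_ ?_ (Set.toFinite _)
    · rintro ⟨a, b⟩ hq
      simp only [Finset.coe_filter, Set.mem_ofPred_eq, SimpleGraph.mk_mem_interedges_iff] at hq
      obtain ⟨⟨ha, hb, hab⟩, rfl⟩ := hq
      have := hadj a ha b hb
      simp only [SimpleGraph.sdiff_adj, not_and, not_not] at this
      exact this hab
    · rintro ⟨a, b⟩ hq ⟨c, d⟩ hq' h
      simp only [Finset.coe_filter, Set.mem_ofPred_eq] at hq hq'
      simp_all
  have h3 : ∑ x ∈ X, (deg H x : ℝ) < ∑ _x ∈ X, p * (Z.card - γ * n) :=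
    Finset.sum_lt_sum_of_nonempty hX hcon
  have h2' : ((G.interedges X Z).card : ℝ) ≤ ∑ x ∈ X, (deg H x : ℝ) := by exact_mod_cast h2
  rw [Finset.sum_const, nsmul_eq_mul] at h3
  nlinarith

/-- If `G ∖ H` has no edge between `X` and `Z`, then fewer than `n/K` vertices of `X` have
`H`-degree noticeably below `p|Z|`. -/
lemma card_low_deg_lt {n : ℕ} (hn : 0 < n) {p γ K : ℝ} (hK : 0 < K) {G H : SimpleGraph (Fin n)}
    (hG : Expands n p γ K G) {X Z : Finset (Fin n)} (hXZ : Disjoint X Z)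
    (hadj : ∀ x ∈ X, ∀ z ∈ Z, ¬ (G \ H).Adj x z) :
    ((X.filter (fun x => (deg H x : ℝ) < p * (Z.card - γ * n))).card : ℝ) < n / K := by
  by_contra! hcon
  have hn' : (0 : ℝ) < n := by exact_mod_cast hn
  set D := X.filter (fun x => (deg H x : ℝ) < p * (Z.card - γ * n)) with hD
  have hDpos : (0 : ℝ) < D.card := lt_of_lt_of_le (by positivity) hcon
  have hDX : D ⊆ X := Finset.filter_subset _ _
  obtain ⟨x, hx, hdeg⟩ := exists_deg_ge (H := H) hG
    (Finset.card_pos.1 (by exact_mod_cast hDpos))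
    (Finset.disjoint_of_subset_left hDX hXZ) (by
      rw [div_le_iff₀ hK] at hcon
      have : (0 : ℝ) ≤ Z.card := by positivity
      linarith) (fun x hx => hadj x (hDX hx))
  have := (Finset.mem_filter.1 hx).2
  linarith

/-- A graph of the Chvátal family cannot have `i` vertices violating the first degree bound and at
the same time `n - i - s` (and at least one) vertices violating the second. -/
lemma not_chvatal {n : ℕ} {p ε : ℝ} {s : ℕ} {H : SimpleGraph (Fin n)}
    (hH : ChvatalFamily n p ε s H) (i : ℕ) (hi1 : 1 ≤ i) (hin : 2 * i < n)
    (P Q : Finset (Fin n)) (hP : i ≤ P.card)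
    (hPdeg : ∀ v ∈ P, p * ((n : ℝ) - i - ε * n) < deg H v)
    (hQ : n ≤ Q.card + i + s) (hQne : Q.Nonempty)
    (hQdeg : ∀ v ∈ Q, p * ((i : ℝ) - ε * n) < deg H v) : False := by
  classical
  obtain ⟨v, hv, hmono, hdeg⟩ := hH
  -- a set with more than `j` members contains one whose position is at least `j`
  have hpos : ∀ (j : Fin n) (S : Finset (Fin n)), j.1 < S.card →
      ∃ w ∈ S, deg H w ≤ deg H (v j) := by
    intro j S hS
    have hc : ((Finset.univ.filter (fun a : Fin n => a < j)).image v).card < S.card := by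
      refine lt_of_le_of_lt Finset.card_image_le ?_
      have : Finset.univ.filter (fun a : Fin n => a < j) = Finset.Iio j := by ext; simp
      rw [this, Fin.card_Iio]; exact hS
    obtain ⟨w, hwS, hw⟩ := Finset.exists_mem_notMem_of_card_lt_card hc
    obtain ⟨b, rfl⟩ := hv.2 w
    refine ⟨_, hwS, hmono _ _ ?_⟩
    by_contra hb
    exact hw (Finset.mem_image.2 ⟨b, by simpa using hb, rfl⟩)
  have hcast : (((i - 1 : ℕ) : ℝ) + 1) = i := by
    rw [Nat.cast_sub hi1]; simp
  have hin' : (2 : ℝ) * i < n := by exact_mod_cast hin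
  have h := hdeg ⟨i - 1, by omega⟩ (by simp only [hcast]; linarith)
  simp only [hcast] at h
  rcases h with h | h
  · obtain ⟨w, hw, hle⟩ := hpos ⟨i - 1, by omega⟩ P (by simp only; omega)
    have h1 := hPdeg w hw
    have h2 : (deg H w : ℝ) ≤ deg H (v ⟨i - 1, by omega⟩) := by exact_mod_cast hle
    nlinarith
  · have hQpos := Finset.card_pos.2 hQne
    obtain ⟨w, hw, hle⟩ := hpos ⟨n - (i - 1 + 1) - s - 1, by omega⟩ Q (by simp only; omega)
    have h1 := hQdeg w hw
    have h2 : (deg H w : ℝ) ≤ deg H (v ⟨n - (i - 1 + 1) - s - 1, by omega⟩) := by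
      exact_mod_cast hle
    nlinarith

/-- After deleting few vertices, compared both with `n` and with `|X|`, the remaining vertices cannot
be split into nonempty sides `X`, `Z` with `|X| ≤ |Z|` and no edge of `G ∖ H` between them. A small side `X` contradicts the Chvátal condition at `i = 1`, a linear one the condition
at `i` slightly below `|X|`. -/
lemma no_sparse_cut {n : ℕ} {p ε K : ℝ} {s : ℕ} {G H : SimpleGraph (Fin n)} (hε : 0 < ε)
    (hp : 0 < p) (hK4 : 4 ≤ K) (hKε : 20 ≤ ε * K) (hnK : K ≤ n) (hs : ε * n ≤ s)
    (hG : Expands n p (ε / 10) K G) (hH : ChvatalFamily n p ε s H)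
    {X Z : Finset (Fin n)} (hX : X.Nonempty) (hXZ : Disjoint X Z)
    (hle : X.card ≤ Z.card) (h3 : n ≤ 3 * X.card + Z.card)
    (hδ : (n : ℝ) - X.card - Z.card ≤ ε / 2 * n)
    (hadj : ∀ x ∈ X, ∀ z ∈ Z, ¬ (G \ H).Adj x z) : False := by
  classical
  have hn4 : (4 : ℝ) ≤ n := by linarith
  have hn4' : 4 ≤ n := by exact_mod_cast hn4
  have hK0 : 0 < K := by linarith
  have hsum : X.card + Z.card ≤ n := by
    rw [← Finset.card_union_of_disjoint hXZ]
    exact (Finset.card_le_univ _).trans (by simp)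
  have hsum' : (X.card : ℝ) + Z.card ≤ n := by exact_mod_cast hsum
  have hle' : (X.card : ℝ) ≤ Z.card := by exact_mod_cast hle
  have h3' : (n : ℝ) ≤ 3 * X.card + Z.card := by exact_mod_cast h3
  have hx1 : (1 : ℝ) ≤ X.card := by exact_mod_cast Finset.card_pos.2 hX
  have hεn : 20 ≤ ε * n := hKε.trans (by gcongr)
  by_cases hsmall : (X.card : ℝ) ≤ ε / 5 * n
  · obtain ⟨x, hx, hdeg⟩ := exists_deg_ge (H := H) hG hX hXZ (by nlinarith) hadj
    refine not_chvatal hH 1 le_rfl (by omega) {x} Finset.univ (by simp) ?_ (by simp; omega)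
      ⟨x, Finset.mem_univ _⟩ ?_
    · intro v hv
      rw [Finset.mem_singleton.1 hv]
      refine lt_of_lt_of_le ?_ hdeg
      refine mul_lt_mul_of_pos_left ?_ hp
      push_cast
      linarith
    · intro v _
      have : p * (((1 : ℕ) : ℝ) - ε * n) < 0 := by
        refine mul_neg_of_pos_of_neg hp ?_
        push_cast; linarith
      exact lt_of_lt_of_le this (by positivity)
  · push Not at hsmall
    have hD1 := card_low_deg_lt (H := H) (by omega) hK0 hG hXZ hadj
    have hD2 := card_low_deg_lt (H := H) (by omega) hK0 hG hXZ.symm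
      (fun z hz x hx h => hadj x hx z hz h.symm)
    set w : ℝ := n / K with hw
    have hw1 : 1 ≤ w := by rw [hw, le_div_iff₀ hK0]; linarith
    have hwε : 20 * w ≤ ε * n := by
      rw [hw, ← mul_div_assoc, div_le_iff₀ hK0]
      nlinarith
    set D1 := X.filter (fun x => (deg H x : ℝ) < p * (Z.card - ε / 10 * n)) with hD1d
    set D2 := Z.filter (fun x => (deg H x : ℝ) < p * (X.card - ε / 10 * n)) with hD2d
    have hi0 : 0 ≤ (X.card : ℝ) - w := by linarith
    set i := ⌊(X.card : ℝ) - w⌋₊ with hi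
    have hile : (i : ℝ) ≤ X.card - w := Nat.floor_le hi0
    have higt : (X.card : ℝ) - w < i + 1 := Nat.lt_floor_add_one _
    have hi1 : 1 ≤ i := by
      have : (1 : ℝ) ≤ i := by linarith
      exact_mod_cast this
    have hP : ((X \ D1).card : ℝ) = X.card - D1.card := by
      rw [Finset.card_sdiff_of_subset (Finset.filter_subset _ _), Nat.cast_sub]
      exact Finset.card_le_card (Finset.filter_subset _ _)
    have hQ : ((Z \ D2).card : ℝ) = Z.card - D2.card := by
      rw [Finset.card_sdiff_of_subset (Finset.filter_subset _ _), Nat.cast_sub]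
      exact Finset.card_le_card (Finset.filter_subset _ _)
    have hPQ : (((X \ D1) ∪ (Z \ D2)).card : ℝ) = (X \ D1).card + (Z \ D2).card := by
      rw [Finset.card_union_of_disjoint, Nat.cast_add]
      exact Finset.disjoint_of_subset_left Finset.sdiff_subset
        (Finset.disjoint_of_subset_right Finset.sdiff_subset hXZ)
    have hPi : i ≤ (X \ D1).card := by
      have : (i : ℝ) ≤ (X \ D1).card := by linarith
      exact_mod_cast this
    have hPdeg : ∀ v ∈ X \ D1, p * (Z.card - ε / 10 * n) ≤ deg H v := by
      intro v hv
      rw [Finset.mem_sdiff] at hv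
      by_contra! hc
      exact hv.2 (Finset.mem_filter.2 ⟨hv.1, hc⟩)
    have hQdeg : ∀ v ∈ Z \ D2, p * (X.card - ε / 10 * n) ≤ deg H v := by
      intro v hv
      rw [Finset.mem_sdiff] at hv
      by_contra! hc
      exact hv.2 (Finset.mem_filter.2 ⟨hv.1, hc⟩)
    refine not_chvatal hH i hi1 ?_ (X \ D1) ((X \ D1) ∪ (Z \ D2)) hPi ?_ ?_ ?_ ?_
    · have : (2 : ℝ) * i < n := by linarith
      exact_mod_cast this
    · intro v hv
      refine lt_of_lt_of_le (mul_lt_mul_of_pos_left ?_ hp) (hPdeg v hv)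
      linarith
    · have : (n : ℝ) ≤ ((X \ D1) ∪ (Z \ D2)).card + i + s := by linarith
      exact_mod_cast this
    · exact (Finset.card_pos.1 (by omega : 0 < (X \ D1).card)).mono Finset.subset_union_left
    · intro v hv
      rcases Finset.mem_union.1 hv with hv | hv
      · refine lt_of_lt_of_le (mul_lt_mul_of_pos_left ?_ hp) (hPdeg v hv)
        linarith
      · refine lt_of_lt_of_le (mul_lt_mul_of_pos_left ?_ hp) (hQdeg v hv)
        linarith

set_option maxHeartbeats 800000 in
/-- The classes of `f` outside `U` stand for a family of unions of components of `(G ∖ H) - U`.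
With `|U|` linear and more than `|U|` classes, almost `|U|` vertices lie in classes of size at most
`A`; almost all of those have `H`-degree at least about `p(n - |U|)`, and almost all remaining
vertices outside `U` have `H`-degree at least about `p|U|`. This contradicts the Chvátal condition at `i` slightly
below `|U|`. -/
lemma no_large_violator {n : ℕ} {p ε A : ℝ} {s : ℕ} {G H : SimpleGraph (Fin n)}
    (hp : 0 < p) (hA4 : 4 ≤ A) (hAε : 20 ≤ ε * A) (hnA : A ^ 2 ≤ n) (hs : ε * n ≤ s)
    (hG : Expands n p (ε / 10) (A ^ 2) G) (hH : ChvatalFamily n p ε s H)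
    {ι : Type*} [DecidableEq ι] (U : Finset (Fin n)) (f : Fin n → ι)
    (hadj : ∀ x ∉ U, ∀ y ∉ U, (G \ H).Adj x y → f x = f y)
    (hU : ε / 2 * n < U.card) (hk : U.card + 1 ≤ (Uᶜ.image f).card) : False := by
  classical
  have hA0 : 0 < A := by linarith
  have hn16 : (16 : ℝ) ≤ n := by nlinarith
  have hn0 : 0 < n := by
    have : (0 : ℝ) < n := by linarith
    exact_mod_cast this
  set w : ℝ := n / A with hw
  have hAw : A * w = n := by rw [hw]; field_simp
  have hw1 : 4 ≤ w := by
    have : A ≤ w := by rw [hw, le_div_iff₀ hA0]; nlinarith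
    linarith
  have hwA : A ≤ w := by rw [hw, le_div_iff₀ hA0]; nlinarith
  have hwε : 20 * w ≤ ε * n := by rw [← hAw]; nlinarith
  have hUc : (Uᶜ.card : ℝ) = n - U.card := by
    rw [Finset.card_compl, Fintype.card_fin, Nat.cast_sub]
    exact (Finset.card_le_univ U).trans (by simp)
  have hu2 : 2 * (U.card : ℝ) + 1 ≤ n := by
    have h1 : (U.card : ℝ) + 1 ≤ Uᶜ.card := by
      exact_mod_cast hk.trans Finset.card_image_le
    linarith
  have hw2 : (n : ℝ) / A ^ 2 ≤ w := by
    rw [hw]; gcongr; nlinarith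
  -- the class of a label, and the vertices in small classes
  set F : ι → Finset (Fin n) := fun b => Uᶜ.filter (fun v => f v = b) with hF
  set S := Uᶜ.filter (fun v => ((F (f v)).card : ℝ) ≤ A) with hS
  have hSU : S ⊆ Uᶜ := Finset.filter_subset _ _
  have hScard : (U.card : ℝ) + 1 - w ≤ S.card := by
    set L := Uᶜ.image f with hL
    set L₁ := L.filter (fun b => ((F b).card : ℝ) ≤ A) with hL₁
    set L₂ := L.filter (fun b => ¬ ((F b).card : ℝ) ≤ A) with hL₂
    have e1 : L₁.card + L₂.card = L.card := Finset.card_filter_add_card_filter_not _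
    have e2 : L₁.card ≤ S.card := by
      refine le_trans (Finset.card_le_card ?_) (Finset.card_image_le (f := f) (s := S))
      intro b hb
      rw [hL₁, Finset.mem_filter, hL, Finset.mem_image] at hb
      obtain ⟨⟨v, hv, rfl⟩, hb⟩ := hb
      exact Finset.mem_image_of_mem f (Finset.mem_filter.2 ⟨hv, hb⟩)
    have e3 : A * L₂.card ≤ n := by
      have hfib : Uᶜ.card = ∑ b ∈ L, (F b).card :=
        Finset.card_eq_sum_card_fiberwise fun v hv => Finset.mem_image_of_mem f hv
      have h1 : (∑ b ∈ L₂, A) ≤ ∑ b ∈ L₂, ((F b).card : ℝ) :=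
        Finset.sum_le_sum fun b hb => (not_le.1 (Finset.mem_filter.1 hb).2).le
      have h2 : ∑ b ∈ L₂, (F b).card ≤ ∑ b ∈ L, (F b).card :=
        Finset.sum_le_sum_of_subset (Finset.filter_subset _ _)
      have h3 : ∑ b ∈ L₂, ((F b).card : ℝ) ≤ Uᶜ.card := by
        rw [hfib]; exact_mod_cast h2
      rw [Finset.sum_const, nsmul_eq_mul] at h1
      have : (0 : ℝ) ≤ U.card := by positivity
      linarith
    have e4 : (L₂.card : ℝ) ≤ w := by rw [hw, le_div_iff₀ hA0]; linarith
    have e5 : (U.card : ℝ) + 1 ≤ L₁.card + L₂.card := by rw [← e1] at hk; exact_mod_cast hk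
    have e6 : (L₁.card : ℝ) ≤ S.card := by exact_mod_cast e2
    linarith
  set D1 := S.filter (fun v => (deg H v : ℝ) < p * (n - U.card - 2 * w - ε / 10 * n)) with hD1d
  have hD1 : (D1.card : ℝ) < n / A ^ 2 := by
    by_contra! hcon
    obtain ⟨X, hXD, hXc⟩ := Finset.exists_subset_card_eq (Nat.ceil_le.2 hcon)
    have hXle : (n : ℝ) / A ^ 2 ≤ X.card := by rw [hXc]; exact Nat.le_ceil _
    have hXlt : (X.card : ℝ) < n / A ^ 2 + 1 := by
      rw [hXc]; exact Nat.ceil_lt_add_one (by positivity)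
    have hXpos : (0 : ℝ) < X.card := lt_of_lt_of_le (by positivity) hXle
    have hXS : X ⊆ S := hXD.trans (Finset.filter_subset _ _)
    set T := X.biUnion (fun v => F (f v)) with hT
    have hTcard : (T.card : ℝ) ≤ 2 * w := by
      have h1 : (T.card : ℝ) ≤ ∑ v ∈ X, ((F (f v)).card : ℝ) := by
        exact_mod_cast Finset.card_biUnion_le
      have h2 : ∑ v ∈ X, ((F (f v)).card : ℝ) ≤ ∑ _v ∈ X, A :=
        Finset.sum_le_sum fun v hv => (Finset.mem_filter.1 (hXS hv)).2
      rw [Finset.sum_const, nsmul_eq_mul] at h2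
      have h3 : (n : ℝ) / A ^ 2 * A = w := by rw [hw]; field_simp
      have h4 : (X.card : ℝ) * A ≤ (n / A ^ 2 + 1) * A :=
        mul_le_mul_of_nonneg_right hXlt.le hA0.le
      linarith
    have hZcard : (n : ℝ) - U.card - 2 * w ≤ (Uᶜ \ T).card := by
      have h1 : Uᶜ.card ≤ (Uᶜ \ T).card + T.card := by
        have := Finset.le_card_sdiff T Uᶜ
        omega
      have h1' : (Uᶜ.card : ℝ) ≤ (Uᶜ \ T).card + T.card := by exact_mod_cast h1
      linarith
    have hXT : X ⊆ T := fun v hv => Finset.mem_biUnion.2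
      ⟨v, hv, Finset.mem_filter.2 ⟨hSU (hXS hv), rfl⟩⟩
    obtain ⟨x, hx, hdeg⟩ := exists_deg_ge (H := H) (X := X) (Z := Uᶜ \ T) hG
      (Finset.card_pos.1 (by exact_mod_cast hXpos))
      (Finset.disjoint_of_subset_left hXT Finset.disjoint_sdiff) (by
        rw [div_le_iff₀ (by positivity)] at hXle
        have : (0 : ℝ) ≤ (Uᶜ \ T).card := by positivity
        linarith) (by
        intro x hx z hz h
        rw [Finset.mem_sdiff] at hz
        refine hz.2 (Finset.mem_biUnion.2 ⟨x, hx, Finset.mem_filter.2 ⟨hz.1, ?_⟩⟩)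
        exact (hadj x (Finset.mem_compl.1 (hSU (hXS hx))) z (Finset.mem_compl.1 hz.1) h).symm)
    have h1 := (Finset.mem_filter.1 (hXD hx)).2
    have h2 : p * (n - U.card - 2 * w - ε / 10 * n) ≤ p * ((Uᶜ \ T).card - ε / 10 * n) :=
      mul_le_mul_of_nonneg_left (by linarith) hp.le
    linarith
  have hadjS : ∀ x ∈ Uᶜ \ S, ∀ z ∈ S, ¬ (G \ H).Adj x z := by
    intro x hx z hz h
    rw [Finset.mem_sdiff] at hx
    have hfx := hadj x (Finset.mem_compl.1 hx.1) z (Finset.mem_compl.1 (hSU hz)) h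
    refine hx.2 (Finset.mem_filter.2 ⟨hx.1, ?_⟩)
    rw [hfx]; exact (Finset.mem_filter.1 hz).2
  have hD2 := card_low_deg_lt (H := H) hn0 (by positivity) hG Finset.sdiff_disjoint hadjS
  set D2 := (Uᶜ \ S).filter (fun x => (deg H x : ℝ) < p * (S.card - ε / 10 * n)) with hD2d
  have hi0 : 0 ≤ (U.card : ℝ) - 2 * w := by linarith
  set i := ⌊(U.card : ℝ) - 2 * w⌋₊ with hi
  have hile : (i : ℝ) ≤ U.card - 2 * w := Nat.floor_le hi0
  have higt : (U.card : ℝ) - 2 * w < i + 1 := Nat.lt_floor_add_one _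
  have hi1 : 1 ≤ i := by
    have : (1 : ℝ) ≤ i := by linarith
    exact_mod_cast this
  have hP : ((S \ D1).card : ℝ) = S.card - D1.card := by
    rw [Finset.card_sdiff_of_subset (Finset.filter_subset _ _), Nat.cast_sub]
    exact Finset.card_le_card (Finset.filter_subset _ _)
  have hQ : (((Uᶜ \ S) \ D2).card : ℝ) = (Uᶜ.card - S.card) - D2.card := by
    rw [Finset.card_sdiff_of_subset (Finset.filter_subset _ _), Nat.cast_sub,
      Finset.card_sdiff_of_subset hSU, Nat.cast_sub (Finset.card_le_card hSU)]
    exact Finset.card_le_card (Finset.filter_subset _ _)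
  have hPQ : (((S \ D1) ∪ ((Uᶜ \ S) \ D2)).card : ℝ) =
      (S \ D1).card + ((Uᶜ \ S) \ D2).card := by
    rw [Finset.card_union_of_disjoint, Nat.cast_add]
    exact Finset.disjoint_of_subset_left Finset.sdiff_subset
      (Finset.disjoint_of_subset_right Finset.sdiff_subset Finset.disjoint_sdiff)
  have hPi : i ≤ (S \ D1).card := by
    have : (i : ℝ) ≤ (S \ D1).card := by linarith
    exact_mod_cast this
  have hPdeg : ∀ v ∈ S \ D1, p * (n - U.card - 2 * w - ε / 10 * n) ≤ deg H v := by
    intro v hv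
    rw [Finset.mem_sdiff] at hv
    by_contra! hc
    exact hv.2 (Finset.mem_filter.2 ⟨hv.1, hc⟩)
  have hQdeg : ∀ v ∈ (Uᶜ \ S) \ D2, p * (S.card - ε / 10 * n) ≤ deg H v := by
    intro v hv
    rw [Finset.mem_sdiff] at hv
    by_contra! hc
    exact hv.2 (Finset.mem_filter.2 ⟨hv.1, hc⟩)
  refine not_chvatal hH i hi1 ?_ (S \ D1) ((S \ D1) ∪ ((Uᶜ \ S) \ D2)) hPi ?_ ?_ ?_ ?_
  · have : (2 : ℝ) * i < n := by linarith
    exact_mod_cast this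
  · intro v hv
    refine lt_of_lt_of_le (mul_lt_mul_of_pos_left ?_ hp) (hPdeg v hv)
    linarith
  · have : (n : ℝ) ≤ ((S \ D1) ∪ ((Uᶜ \ S) \ D2)).card + i + s := by linarith
    exact_mod_cast this
  · exact (Finset.card_pos.1 (by omega : 0 < (S \ D1).card)).mono Finset.subset_union_left
  · intro v hv
    rcases Finset.mem_union.1 hv with hv | hv
    · refine lt_of_lt_of_le (mul_lt_mul_of_pos_left ?_ hp) (hPdeg v hv)
      linarith
    · refine lt_of_lt_of_le (mul_lt_mul_of_pos_left ?_ hp) (hQdeg v hv)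
      linarith

/-- No set `U` leaves more than `|U|`, and at least two, classes without edges of `G ∖ H` between
them. When `|U|` is small the classes are split into two families of nearly equal number, which
gives a sparse cut. -/
lemma no_violator {n : ℕ} {p ε A : ℝ} {s : ℕ} {G H : SimpleGraph (Fin n)} (hε : 0 < ε)
    (hp : 0 < p) (hA4 : 4 ≤ A) (hAε : 20 ≤ ε * A) (hnA : A ^ 2 ≤ n) (hs : ε * n ≤ s)
    (hG : Expands n p (ε / 10) (A ^ 2) G) (hH : ChvatalFamily n p ε s H)
    {ι : Type*} [DecidableEq ι] (U : Finset (Fin n)) (f : Fin n → ι)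
    (hadj : ∀ x ∉ U, ∀ y ∉ U, (G \ H).Adj x y → f x = f y)
    (hk : U.card + 1 ≤ (Uᶜ.image f).card) (hk2 : 2 ≤ (Uᶜ.image f).card) : False := by
  classical
  rcases lt_or_ge (ε / 2 * n) (U.card : ℝ) with hU | hU
  · exact no_large_violator hp hA4 hAε hnA hs hG hH U f hadj hU hk
  set L := Uᶜ.image f with hL
  obtain ⟨L₁, hL₁, hL₁c⟩ := Finset.exists_subset_card_eq (Nat.div_le_self L.card 2)
  set X := Uᶜ.filter (fun v => f v ∈ L₁) with hX
  set Y := Uᶜ.filter (fun v => ¬ f v ∈ L₁) with hY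
  have hsum : X.card + Y.card = Uᶜ.card := Finset.card_filter_add_card_filter_not _
  have hUc : Uᶜ.card + U.card = n := by
    rw [add_comm, Finset.card_add_card_compl, Fintype.card_fin]
  have hXc : L.card / 2 ≤ X.card := by
    rw [← hL₁c]
    refine le_trans (Finset.card_le_card ?_) (Finset.card_image_le (f := f) (s := X))
    intro b hb
    obtain ⟨v, hv, rfl⟩ := Finset.mem_image.1 (hL₁ hb)
    exact Finset.mem_image_of_mem f (Finset.mem_filter.2 ⟨hv, hb⟩)
  have hYc : L.card - L.card / 2 ≤ Y.card := by
    rw [← hL₁c, ← Finset.card_sdiff_of_subset hL₁]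
    refine le_trans (Finset.card_le_card ?_) (Finset.card_image_le (f := f) (s := Y))
    intro b hb
    rw [Finset.mem_sdiff] at hb
    obtain ⟨v, hv, rfl⟩ := Finset.mem_image.1 hb.1
    exact Finset.mem_image_of_mem f (Finset.mem_filter.2 ⟨hv, hb.2⟩)
  have hdisj : Disjoint X Y := Finset.disjoint_filter_filter_not _ _ _
  have hXY : ∀ x ∈ X, ∀ y ∈ Y, ¬ (G \ H).Adj x y := by
    intro x hx y hy h
    rw [hX, Finset.mem_filter, Finset.mem_compl] at hx
    rw [hY, Finset.mem_filter, Finset.mem_compl] at hy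
    exact hy.2 (hadj x hx.1 y hy.1 h ▸ hx.2)
  have hsumR : (X.card : ℝ) + Y.card + U.card = n := by
    exact_mod_cast (by omega : X.card + Y.card + U.card = n)
  have hK4 : 4 ≤ A ^ 2 := by nlinarith
  have hKε : 20 ≤ ε * A ^ 2 := by nlinarith
  rcases le_total X.card Y.card with h | h
  · exact no_sparse_cut hε hp hK4 hKε hnA hs hG hH (Finset.card_pos.1 (by omega)) hdisj h
      (by omega) (by linarith) hXY
  · exact no_sparse_cut hε hp hK4 hKε hnA hs hG hH (Finset.card_pos.1 (by omega)) hdisj.symm h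
      (by omega) (by linarith) (fun y hy x hx h => hXY x hx y hy h.symm)

/-! ### Perfect matchings -/

/-- Tutte's theorem turns the absence of violators into a perfect matching; the labelling of the
vertices outside `u` is by components of `(G ∖ H) - u`. -/
lemma exists_perfectMatching {n : ℕ} (hn : Even n) {p ε A : ℝ} {s : ℕ}
    {G H : SimpleGraph (Fin n)} (hε : 0 < ε)
    (hp : 0 < p) (hA4 : 4 ≤ A) (hAε : 20 ≤ ε * A) (hnA : A ^ 2 ≤ n) (hs : ε * n ≤ s)
    (hG : Expands n p (ε / 10) (A ^ 2) G) (hH : ChvatalFamily n p ε s H) :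
    ∃ M : (G \ H).Subgraph, M.IsPerfectMatching := by
  classical
  rw [SimpleGraph.tutte]
  intro u hu
  unfold SimpleGraph.IsTutteViolator at hu
  set R := ((⊤ : (G \ H).Subgraph).deleteVerts u).coe with hR
  have hmem : ∀ v, v ∉ u.toFinset → v ∈ ((⊤ : (G \ H).Subgraph).deleteVerts u).verts := by
    intro v hv; simpa using hv
  set f : Fin n → Option R.ConnectedComponent := fun v =>
    if h : v ∉ u.toFinset then some (R.connectedComponentMk ⟨v, hmem v h⟩) else none with hf
  have hcard : R.oddComponents.ncard ≤ (u.toFinsetᶜ.image f).card := by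
    rw [← Set.ncard_coe_finset]
    refine Set.ncard_le_ncard_of_injOn some ?_ (Option.some_injective _).injOn (Set.toFinite _)
    intro c _
    induction c using SimpleGraph.ConnectedComponent.ind with
    | h v =>
      have hv : v.1 ∉ u.toFinset := by simpa using v.2
      rw [Finset.mem_coe, Finset.mem_image]
      exact ⟨v.1, Finset.mem_compl.2 hv, by simp only [hf, dif_pos hv]⟩
  have hucard : u.ncard = u.toFinset.card := Set.ncard_eq_toFinset_card' u
  have hk : u.toFinset.card + 1 ≤ (u.toFinsetᶜ.image f).card := by omega
  refine no_violator hε hp hA4 hAε hnA hs hG hH u.toFinset f ?_ hk ?_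
  · intro x hx y hy h
    simp only [hf, dif_pos hx, dif_pos hy]
    congr 1
    refine SimpleGraph.ConnectedComponent.sound (SimpleGraph.Adj.reachable ?_)
    rw [hR, SimpleGraph.Subgraph.coe_adj, SimpleGraph.Subgraph.deleteVerts_adj]
    have hx' : x ∉ u := by simpa using hx
    have hy' : y ∉ u := by simpa using hy
    exact ⟨trivial, hx', trivial, hy', h⟩
  · -- only `u = ∅` is at stake, and there the number of odd components is even because `n` is
    by_contra hlt
    have h0 : u.toFinset.card = 0 := by omega
    have hu0 : u = ∅ := Set.toFinset_eq_empty.1 (Finset.card_eq_zero.1 h0)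
    have hodd : Odd R.oddComponents.ncard := by
      have : R.oddComponents.ncard = 1 := by omega
      rw [this]; exact odd_one
    rw [SimpleGraph.odd_ncard_oddComponents] at hodd
    have hc : Nat.card ((⊤ : (G \ H).Subgraph).deleteVerts u).verts = n := by
      subst hu0; simp
    rw [hc] at hodd
    exact (Nat.not_odd_iff_even.2 hn) hodd

/-- Theorem 1.5.  For every `ε > 0` there exists `C > 0` such that,
whenever `p ≥ C log n / n` and `n` is even, a.a.s. for every subgraph
`H ∈ H^{ε,ε}_{n,p}(G_{n,p})` the graph `G_{n,p} ∖ H` has a perfect matching. -/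
theorem chvatal_resilience_matching (ε : ℝ) (hε : 0 < ε) :
    ∃ C : ℝ, 0 < C ∧ ∀ η : ℝ, 0 < η → ∃ N : ℕ, ∀ n : ℕ, N ≤ n → Even n →
      ∀ p : ℝ, C * Real.log n / n ≤ p → p ≤ 1 →
        1 - η ≤ Pr n p (fun G =>
          ∀ H : SimpleGraph (Fin n), H ≤ G → ChvatalFamily n p ε ⌈ε * n⌉₊ H →
            ∃ M : (G \ H).Subgraph, M.IsPerfectMatching) := by
  set A : ℝ := 20 / ε + 4 with hA
  have hA4 : 4 ≤ A := by
    have : 0 < 20 / ε := by positivity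
    linarith
  have hAε : 20 ≤ ε * A := by
    have : ε * A = 20 + 4 * ε := by rw [hA]; field_simp
    linarith
  -- the constant making the union bound work, for expansion parameters `ε / 10` and `A ^ 2`
  set C : ℝ := (2 + 2 * A ^ 2) * (4 / (ε / 10) ^ 2) with hC
  have hC0 : 0 < C := by positivity
  refine ⟨C, hC0, fun η hη => ?_⟩
  have hlim : Tendsto (fun n : ℕ => (Real.exp (1 / n) - 1) * Real.exp (1 / n)) atTop
      (nhds 0) := by
    have h1 : Tendsto (fun n : ℕ => Real.exp (1 / (n : ℝ))) atTop (nhds 1) := by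
      have := (Real.continuous_exp.tendsto 0).comp (tendsto_one_div_atTop_nhds_zero_nat (𝕜 := ℝ))
      simpa [Function.comp_def] using this
    simpa using (h1.sub_const 1).mul h1
  have hev := (hlim.eventually (gt_mem_nhds hη)).and
    ((tendsto_natCast_atTop_atTop (R := ℝ)).eventually_ge_atTop (A ^ 2))
  obtain ⟨N, hN⟩ := eventually_atTop.1 hev
  refine ⟨N, fun n hn heven p hp hp1 => ?_⟩
  obtain ⟨hsmall, hnA⟩ := hN n hn
  have hn16 : (16 : ℝ) ≤ n := by nlinarith
  have hn1 : 1 ≤ n := by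
    have : (1 : ℝ) ≤ n := by linarith
    exact_mod_cast this
  have hp0 : 0 < p := by
    refine lt_of_lt_of_le ?_ hp
    have : 0 < Real.log n := Real.log_pos (by linarith)
    positivity
  have hexp := Pr_not_expands hn1 (γ := ε / 10) (K := A ^ 2) hp1 (by positivity) hC0.le
    (by rw [hC]; apply le_of_eq; field_simp) hp
  have hmono := Pr_mono hp0.le hp1 (Q := Expands n p (ε / 10) (A ^ 2))
    (R := fun G => ∀ H : SimpleGraph (Fin n), H ≤ G → ChvatalFamily n p ε ⌈ε * n⌉₊ H →
            ∃ M : (G \ H).Subgraph, M.IsPerfectMatching)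
    (fun G hG H _ hH => exists_perfectMatching heven hε hp0 hA4 hAε hnA (Nat.le_ceil _) hG hH)
  rw [Pr_not] at hmono
  linarith

end Resilience
end

section
/- For every 0 < ε < 10^{-6} there exists C > 0 such that, whenever C log n / n ≤ p ≤ 1/25, the binomial random graph G_{n,p} asymptotically almost surely is NOT (ε, ⌈(3p)^{-1}⌉/n)-Chvátal-resilient with respect to containing an optimal matching; that is, a.a.s. there exists a subgraph H ∈ H^{ε,γ}_{n,p}(G_{n,p}) with γ = ⌈(3p)^{-1}⌉/n such that G_{n,p} ∖ H contains no matching of size ⌊n/2⌋. -/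
/-!
Any set `B` of `⌊n/2⌋ - 1` vertices yields a graph without an optimal matching: delete from `G`
the graph `H` of all edges of `G` avoiding `B`; every remaining edge meets `B`, so a matching has
at most `|B|` edges.  It remains to choose `B` so that `H` is of shifted Chvátal type.

Put `s = ⌈(3p)⁻¹⌉` and `k = s + 2`.  Let `B` contain the first `⌊n/50⌋` vertices together with the
whole neighbourhood of an independent set `I` of `k` other vertices.  If every vertex has at most
`(1 - 2ε)np` neighbours outside the first `⌊n/50⌋` vertices, then such an `I` exists greedily, and
`⌊n/50⌋ + k(1 - 2ε)np ≤ n/50 + n/3 + 3np < n/2 - 1`, so there is room for `B`.  The vertices of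
`B ∪ I` are isolated in `H`, so `v_{n-i-s}` is isolated for every `i < n/2`; this gives the second
Chvátal alternative for `i ≥ εn`.  All degrees in `H` are at most `(1 - 2ε)np`, which gives the
first alternative for `i < εn`.  This deterministic part is `exists_bad_subgraph` and
`chvatal_of_isolated`.

The degree condition holds a.a.s. by the exponential-moment bound on the upper tail: the number of
neighbours of a vertex in a set of at most `0.981n` vertices exceeds `0.999np` with probability at
most `exp(-np/20000)`, and `np ≥ 40000 log n` leaves room for a union bound
(`sum_weight_mul_exp_le`, `one_sub_le_Pr`).
-/

open Filter Real

namespace Resilience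

variable {V : Type*}

/-! ### The deterministic construction -/

open Classical in
/-- The number of neighbours of `v` among the vertices with label at least `b`. -/
noncomputable def upDeg {n : ℕ} (G : SimpleGraph (Fin n)) (b : ℕ) (v : Fin n) : ℕ :=
  (Finset.univ.filter fun u : Fin n => G.Adj v u ∧ b ≤ u.1).card

/-- Greedy choice: if upward degrees are at most `D`, the vertices with label at least `b` contain
an independent set of any size `k` with `b + k (D + 1) ≤ n`. -/
lemma exists_indep {n : ℕ} (G : SimpleGraph (Fin n)) (b D : ℕ)
    (hD : ∀ v, upDeg G b v ≤ D) (k : ℕ) (hk : b + k * (D + 1) ≤ n) :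
    ∃ I : Finset (Fin n), I.card = k ∧ (∀ x ∈ I, b ≤ x.1) ∧
      ∀ x ∈ I, ∀ y ∈ I, ¬ G.Adj x y := by
  classical
  induction k with
  | zero => exact ⟨∅, by simp⟩
  | succ k ih =>
    obtain ⟨I, hc, hb, hI⟩ := ih (by nlinarith)
    -- The vertices excluded by `I`: low labels, `I` itself and upward neighbours of `I`.
    let T : Finset (Fin n) := (Finset.univ.filter fun u : Fin n => u.1 < b) ∪
      I.biUnion fun x => insert x (Finset.univ.filter fun u : Fin n => G.Adj x u ∧ b ≤ u.1)
    have hlow : (Finset.univ.filter fun u : Fin n => u.1 < b).card ≤ b := by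
      have : (Finset.univ.filter fun u : Fin n => u.1 < b).card ≤ (Finset.range b).card := by
        apply Finset.card_le_card_of_injOn (fun u => u.1)
        · intro u hu
          simpa using hu
        · intro u _ w _ h
          exact Fin.ext h
      simpa using this
    have hT : T.card ≤ b + k * (D + 1) := by
      refine (Finset.card_union_le _ _).trans (add_le_add hlow ?_)
      rw [← hc]
      refine Finset.card_biUnion_le_card_mul _ _ _ fun x _ => ?_
      exact (Finset.card_insert_le _ _).trans (Nat.add_le_add_right (hD x) 1)
    have hlt : T.card < (Finset.univ : Finset (Fin n)).card := by
      simp only [Finset.card_univ, Fintype.card_fin]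
      nlinarith
    obtain ⟨y, -, hy⟩ := Finset.exists_mem_notMem_of_card_lt_card hlt
    simp only [T, Finset.mem_union, Finset.mem_filter, Finset.mem_univ, true_and,
      Finset.mem_biUnion, Finset.mem_insert, not_or, not_exists, not_and, not_lt, not_le] at hy
    obtain ⟨hyb, hyI⟩ := hy
    have hyn : y ∉ I := fun h => (hyI y h).1 rfl
    have hadj : ∀ x ∈ I, ¬ G.Adj x y := fun x hx h => by
      have := (hyI x hx).2 h
      omega
    refine ⟨insert y I, by rw [Finset.card_insert_of_notMem hyn, hc], ?_, ?_⟩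
    · intro x hx
      rcases Finset.mem_insert.1 hx with rfl | hx
      · exact hyb
      · exact hb x hx
    · intro x hx z hz
      rcases Finset.mem_insert.1 hx with rfl | hx' <;>
        rcases Finset.mem_insert.1 hz with rfl | hz'
      · exact G.irrefl
      · exact fun h => hadj z hz' h.symm
      · exact hadj x hx'
      · exact hI x hx' z hz'

/-- A matching all of whose edges meet `B` has at most `|B|` edges. -/
lemma matching_card_le {n : ℕ} (G : SimpleGraph (Fin n)) (B : Finset (Fin n))
    (hB : ∀ x y, G.Adj x y → x ∈ B ∨ y ∈ B) (M : G.Subgraph) (hM : M.IsMatching) :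
    M.edgeSet.ncard ≤ B.card := by
  -- For `n = 0` both sides vanish.
  rcases Nat.eq_zero_or_pos n with rfl | hn
  · rw [Set.eq_empty_of_isEmpty M.edgeSet]
    simp
  have : Nonempty (Fin n) := ⟨⟨0, hn⟩⟩
  have key : ∀ e ∈ M.edgeSet, ∃ x ∈ B, x ∈ e := by
    intro e
    induction e using Sym2.ind with
    | _ x y =>
      intro he
      rcases hB x y (M.adj_sub he) with h | h
      · exact ⟨x, h, by simp⟩
      · exact ⟨y, h, by simp⟩
  choose! f hf using key
  rw [← Set.ncard_coe_finset]
  refine Set.ncard_le_ncard_of_injOn f (fun e he => (hf e he).1) ?_ (Finset.finite_toSet B)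
  intro e he e' he' h
  obtain ⟨y, hy⟩ := (hf e he).2
  obtain ⟨z, hz⟩ := (hf e' he').2
  rw [← h] at hz
  rw [hy, SimpleGraph.Subgraph.mem_edgeSet] at he
  rw [hz, SimpleGraph.Subgraph.mem_edgeSet] at he'
  rw [hy, hz]
  generalize f e = x at he he' ⊢
  rw [hM.eq_of_adj_left he he']

/-- If all upward degrees are at most `D`, there is a subgraph `H` of maximum degree at most `D`
with `⌊n/2⌋ - 1 + k` isolated vertices whose removal destroys all optimal matchings: its edges are
those avoiding a set `B` of size `⌊n/2⌋ - 1`, where `B` contains all vertices with label less than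
`b` and all neighbours of an independent `k`-set. -/
lemma exists_bad_subgraph {n : ℕ} (G : SimpleGraph (Fin n)) (b D k : ℕ)
    (hD : ∀ v, upDeg G b v ≤ D) (hk : b + k * (D + 1) + 1 ≤ n / 2) :
    ∃ H : SimpleGraph (Fin n), H ≤ G ∧ (∀ v, deg H v ≤ D) ∧
      (∃ Z : Finset (Fin n), n / 2 - 1 + k ≤ Z.card ∧ ∀ v ∈ Z, deg H v = 0) ∧
      ∀ M : (G \ H).Subgraph, ¬ (M.IsMatching ∧ M.edgeSet.ncard = n / 2) := by
  classical
  obtain ⟨I, hc, hb, hI⟩ := exists_indep G b D hD k (by omega)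
  let B₀ : Finset (Fin n) := (Finset.univ.filter fun u : Fin n => u.1 < b) ∪
      I.biUnion fun x => Finset.univ.filter fun u : Fin n => G.Adj x u ∧ b ≤ u.1
  have hlow : (Finset.univ.filter fun u : Fin n => u.1 < b).card ≤ b := by
    have : (Finset.univ.filter fun u : Fin n => u.1 < b).card ≤ (Finset.range b).card := by
      apply Finset.card_le_card_of_injOn (fun u => u.1)
      · intro u hu
        simpa using hu
      · intro u _ w _ h
        exact Fin.ext h
    simpa using this
  have hB₀ : B₀.card ≤ b + k * D := by
    refine (Finset.card_union_le _ _).trans (add_le_add hlow ?_)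
    rw [← hc]
    exact Finset.card_biUnion_le_card_mul _ _ _ fun x _ => hD x
  have hsub : B₀ ⊆ Finset.univ \ I := by
    intro u hu
    simp only [B₀, Finset.mem_union, Finset.mem_filter, Finset.mem_univ, true_and,
      Finset.mem_biUnion] at hu
    simp only [Finset.mem_sdiff, Finset.mem_univ, true_and]
    intro huI
    rcases hu with h | ⟨x, hx, h, -⟩
    · have := hb u huI
      omega
    · exact hI x hx u huI h
  have hkD : k ≤ k * (D + 1) := Nat.le_mul_of_pos_right _ (by omega)
  have hkD' : k * (D + 1) = k * D + k := by ring
  have hIc : (Finset.univ \ I).card = n - k := by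
    rw [Finset.card_sdiff_of_subset (Finset.subset_univ _), hc, Finset.card_univ, Fintype.card_fin]
  obtain ⟨B, hB₀B, hBI, hBc⟩ := Finset.exists_subsuperset_card_eq (n := n / 2 - 1) hsub
    (by omega) (by omega)
  let H : SimpleGraph (Fin n) :=
    { Adj := fun x y => G.Adj x y ∧ x ∉ B ∧ y ∉ B
      symm := ⟨fun x y h => ⟨h.1.symm, h.2.2, h.2.1⟩⟩
      loopless := ⟨fun x h => G.irrefl h.1⟩ }
  have hHadj : ∀ x y, H.Adj x y ↔ G.Adj x y ∧ x ∉ B ∧ y ∉ B := fun _ _ => Iff.rfl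
  have hlowB : ∀ u : Fin n, u ∉ B → b ≤ u.1 := by
    intro u hu
    by_contra h
    exact hu (hB₀B (by simp [B₀]; left; omega))
  refine ⟨H, fun x y h => h.1, ?_, ⟨B ∪ I, ?_, ?_⟩, ?_⟩
  · intro v
    refine le_trans ?_ (hD v)
    unfold deg upDeg
    rw [← Set.ncard_coe_finset]
    refine Set.ncard_le_ncard ?_ (Finset.finite_toSet _)
    intro u hu
    have hu' : H.Adj v u := hu
    simpa using ⟨hu'.1, hlowB u hu'.2.2⟩
  · rw [Finset.card_union_of_disjoint, hBc, hc]
    exact Finset.disjoint_left.2 fun x hx => (Finset.mem_sdiff.1 (hBI hx)).2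
  · intro v hv
    unfold deg
    rw [Set.ncard_eq_zero (Set.toFinite _), Set.eq_empty_iff_forall_notMem]
    intro u hu
    have hu' : H.Adj v u := hu
    rcases Finset.mem_union.1 hv with h | h
    · exact hu'.2.1 h
    · apply hu'.2.2
      apply hB₀B
      simp only [B₀, Finset.mem_union, Finset.mem_filter, Finset.mem_univ, true_and,
        Finset.mem_biUnion]
      exact Or.inr ⟨v, h, hu'.1, hlowB u hu'.2.2⟩
  · rintro M ⟨hM, hMc⟩
    have := matching_card_le (G \ H) B (by
      intro x y h
      rw [SimpleGraph.sdiff_adj, hHadj] at h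
      tauto) M hM
    omega

/-- Small maximum degree and many isolated vertices force the shifted Chvátal condition. -/
lemma chvatal_of_isolated {n : ℕ} {p ε : ℝ} (hp : 0 ≤ p) (s : ℕ) (H : SimpleGraph (Fin n))
    (hs : s + 1 ≤ n / 2)
    (hdeg : ∀ v, (deg H v : ℝ) ≤ (1 - 2 * ε) * (n * p)) (Z : Finset (Fin n))
    (hZ : n / 2 - 1 + (s + 2) ≤ Z.card) (hZ0 : ∀ v ∈ Z, deg H v = 0) :
    ChvatalFamily n p ε s H := by
  classical
  let g : Fin n → ℤ := fun v => -(deg H v : ℤ)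
  let σ : Equiv.Perm (Fin n) := Tuple.sort g
  have hmono : Monotone (g ∘ σ) := Tuple.monotone_sort g
  have hanti : ∀ i j : Fin n, i ≤ j → deg H (σ j) ≤ deg H (σ i) := by
    intro i j hij
    have := hmono hij
    simp only [g, Function.comp] at this
    omega
  -- The degrees decrease along `σ`, so the isolated vertices occupy the last positions.
  have hzero : ∀ j : Fin n, n ≤ j.1 + Z.card → deg H (σ j) = 0 := by
    intro j hj
    by_contra hne
    have hdisj : Disjoint Z ((Finset.Iic j).map σ.toEmbedding) := by
      rw [Finset.disjoint_left]
      intro x hx hx'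
      obtain ⟨i, hi, rfl⟩ := Finset.mem_map.1 hx'
      have h1 := hanti i j (Finset.mem_Iic.1 hi)
      have h2 := hZ0 _ hx
      simp only [Equiv.coe_toEmbedding] at h2
      omega
    have h3 := Finset.card_le_univ (Z ∪ (Finset.Iic j).map σ.toEmbedding)
    rw [Finset.card_union_of_disjoint hdisj, Finset.card_map, Fin.card_Iic, Fintype.card_fin] at h3
    omega
  refine ⟨σ, σ.bijective, hanti, ?_⟩
  intro i hi
  have hi' : 2 * (i.1 + 1) < n := by
    have : (2 * ((i.1 : ℝ) + 1)) < n := by linarith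
    exact_mod_cast this
  by_cases h : (i.1 : ℝ) + 1 ≤ ε * n
  · left
    have := hdeg (σ i)
    nlinarith [mul_le_mul_of_nonneg_right h hp]
  · right
    rw [hzero _ (by simp only; omega)]
    push Not at h
    have := mul_le_mul_of_nonneg_right h.le hp
    push_cast
    linarith

/-! ### Exponential moments in the binomial random graph -/

/-- A sum over graphs, weighted by a factor for each present and each absent edge, is a product
over all potential edges. -/
lemma sum_graph_prod (n : ℕ) (f g : Sym2 (Fin n) → ℝ) [DecidableEq (Sym2 (Fin n))]
    [∀ G : SimpleGraph (Fin n), Fintype G.edgeSet] :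
    ∑ G : SimpleGraph (Fin n), (∏ e ∈ G.edgeFinset, f e) *
        ∏ e ∈ (⊤ : SimpleGraph (Fin n)).edgeFinset \ G.edgeFinset, g e =
      ∏ e ∈ (⊤ : SimpleGraph (Fin n)).edgeFinset, (f e + g e) := by
  classical
  rw [Finset.prod_add]
  refine Finset.sum_bij (fun G _ => G.edgeFinset) ?_ ?_ ?_ ?_
  · intro G _
    rw [Finset.mem_powerset]
    exact SimpleGraph.edgeFinset_mono le_top
  · intro G _ G' _ h
    exact SimpleGraph.edgeFinset_inj.1 h
  · intro S hS
    refine ⟨SimpleGraph.fromEdgeSet (S : Set (Sym2 (Fin n))), Finset.mem_univ _, ?_⟩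
    ext e
    rw [SimpleGraph.mem_edgeFinset, SimpleGraph.edgeSet_fromEdgeSet]
    constructor
    · intro h
      exact h.1
    · intro h
      refine ⟨h, ?_⟩
      have := Finset.mem_powerset.1 hS h
      rw [SimpleGraph.mem_edgeFinset] at this
      exact SimpleGraph.not_isDiag_of_mem_edgeSet _ this
  · intro G _
    rfl

open Classical in
lemma weight_eq_prod (n : ℕ) (p : ℝ) (G : SimpleGraph (Fin n)) :
    weight n p G = (∏ _e ∈ G.edgeFinset, p) *
      ∏ _e ∈ (⊤ : SimpleGraph (Fin n)).edgeFinset \ G.edgeFinset, (1 - p) := by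
  have h1 : G.edgeSet.ncard = G.edgeFinset.card := by
    rw [← SimpleGraph.coe_edgeFinset, Set.ncard_coe_finset]
  have h2 : (⊤ : SimpleGraph (Fin n)).edgeFinset.card = n.choose 2 := by
    rw [SimpleGraph.card_edgeFinset_top_eq_card_choose_two, Fintype.card_fin]
  rw [weight, Finset.prod_const, Finset.prod_const,
    Finset.card_sdiff_of_subset (SimpleGraph.edgeFinset_mono le_top), h1, h2]

/-- The moment generating function of an upward degree is at most that of a Poisson variable of
mean `(n - b) p`. -/
lemma sum_weight_mul_exp_le {n : ℕ} {p t : ℝ} (h0 : 0 ≤ p) (ht : 0 ≤ t) (b : ℕ)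
    (hb : b ≤ n) (v : Fin n) :
    ∑ G : SimpleGraph (Fin n), weight n p G * Real.exp (t * upDeg G b v) ≤
      Real.exp (((n : ℝ) - b) * (p * (Real.exp t - 1))) := by
  classical
  -- The potential edges counted by the upward degree of `v`.
  let F : Finset (Sym2 (Fin n)) :=
    (Finset.univ.filter fun u : Fin n => v ≠ u ∧ b ≤ u.1).image fun u => s(v, u)
  have hFtop : F ⊆ (⊤ : SimpleGraph (Fin n)).edgeFinset := by
    intro e he
    obtain ⟨u, hu, rfl⟩ := Finset.mem_image.1 he
    rw [SimpleGraph.mem_edgeFinset]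
    exact (Finset.mem_filter.1 hu).2.1
  have hFc : F.card ≤ n - b := by
    refine Finset.card_image_le.trans ?_
    have : (Finset.univ.filter fun u : Fin n => v ≠ u ∧ b ≤ u.1).card ≤ (Finset.Ico b n).card := by
      apply Finset.card_le_card_of_injOn (fun u => u.1)
      · intro u hu
        simp at hu
        simp [hu.2]
      · intro u _ w _ h
        exact Fin.ext h
    simpa using this
  have hX : ∀ G : SimpleGraph (Fin n), upDeg G b v = (G.edgeFinset ∩ F).card := by
    intro G
    have : G.edgeFinset ∩ F =
        (Finset.univ.filter fun u : Fin n => G.Adj v u ∧ b ≤ u.1).image fun u => s(v, u) := by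
      ext e
      simp only [Finset.mem_inter, F, Finset.mem_image, Finset.mem_filter, Finset.mem_univ,
        true_and, SimpleGraph.mem_edgeFinset]
      constructor
      · rintro ⟨h, u, hu, rfl⟩
        exact ⟨u, ⟨h, hu.2⟩, rfl⟩
      · rintro ⟨u, hu, rfl⟩
        exact ⟨hu.1, u, ⟨hu.1.ne, hu.2⟩, rfl⟩
    rw [this, Finset.card_image_of_injective]
    · rfl
    · intro u w h
      exact Sym2.congr_right.1 h
  have hterm : ∀ G : SimpleGraph (Fin n), weight n p G * Real.exp (t * upDeg G b v) =
      (∏ e ∈ G.edgeFinset, p * (if e ∈ F then Real.exp t else 1)) *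
        ∏ _e ∈ (⊤ : SimpleGraph (Fin n)).edgeFinset \ G.edgeFinset, (1 - p) := by
    intro G
    rw [weight_eq_prod, Finset.prod_mul_distrib, Finset.prod_ite_mem, Finset.prod_const (Real.exp t),
      ← hX, ← Real.exp_nat_mul, mul_comm t]
    ring
  have hprod : ∑ G : SimpleGraph (Fin n), weight n p G * Real.exp (t * upDeg G b v) =
      ∏ e ∈ (⊤ : SimpleGraph (Fin n)).edgeFinset,
        (p * (if e ∈ F then Real.exp t else 1) + (1 - p)) := by
    simp_rw [hterm]
    convert sum_graph_prod n (fun e => p * (if e ∈ F then Real.exp t else 1)) (fun _ => 1 - p)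
  rw [hprod]
  have hq : 0 ≤ p * (Real.exp t - 1) := mul_nonneg h0 (by linarith [Real.add_one_le_exp t])
  have : ∀ e : Sym2 (Fin n), p * (if e ∈ F then Real.exp t else 1) + (1 - p) =
      if e ∈ F then 1 + p * (Real.exp t - 1) else 1 := by
    intro e
    split_ifs <;> ring
  simp_rw [this]
  rw [Finset.prod_ite_mem, Finset.inter_eq_right.2 hFtop, Finset.prod_const]
  calc (1 + p * (Real.exp t - 1)) ^ F.card
      ≤ (1 + p * (Real.exp t - 1)) ^ (n - b) := pow_le_pow_right₀ (by linarith) hFc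
    _ ≤ (Real.exp (p * (Real.exp t - 1))) ^ (n - b) := by
        gcongr
        linarith [Real.add_one_le_exp (p * (Real.exp t - 1))]
    _ = Real.exp (((n : ℝ) - b) * (p * (Real.exp t - 1))) := by
        rw [← Real.exp_nat_mul, Nat.cast_sub hb]

/-- Union bound: a property implied by all upward degrees being at most `a` has failure
probability at most `n` times the Chernoff bound for a single upward degree. -/
lemma one_sub_le_Pr {n : ℕ} {p t a : ℝ} (h0 : 0 ≤ p) (h1 : p ≤ 1) (ht : 0 ≤ t) (b : ℕ)
    (hb : b ≤ n) (Q : SimpleGraph (Fin n) → Prop)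
    (hQ : ∀ G, (∀ v, (upDeg G b v : ℝ) ≤ a) → Q G) :
    1 - n * Real.exp (((n : ℝ) - b) * (p * (Real.exp t - 1)) - t * a) ≤ Pr n p Q := by
  classical
  have hpt : ∀ G : SimpleGraph (Fin n), weight n p G ≤ (if Q G then weight n p G else 0) +
      ∑ v, weight n p G * Real.exp (t * upDeg G b v) * Real.exp (-(t * a)) := by
    intro G
    have hw := weight_nonneg h0 h1 G
    have hnn : ∀ v ∈ Finset.univ,
        0 ≤ weight n p G * Real.exp (t * upDeg G b v) * Real.exp (-(t * a)) :=
      fun v _ => by positivity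
    by_cases hG : Q G
    · rw [if_pos hG]
      linarith [Finset.sum_nonneg hnn]
    · have : ∃ v, a < (upDeg G b v : ℝ) := by
        by_contra h
        push Not at h
        exact hG (hQ G h)
      obtain ⟨v, hv⟩ := this
      rw [if_neg hG, zero_add]
      refine le_trans ?_ (Finset.single_le_sum hnn (Finset.mem_univ v))
      rw [mul_assoc, ← Real.exp_add]
      refine le_mul_of_one_le_right hw (Real.one_le_exp ?_)
      nlinarith [mul_le_mul_of_nonneg_left hv.le ht]
  have hsum := Finset.sum_le_sum fun G (_ : G ∈ Finset.univ) => hpt G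
  rw [sum_weight, Finset.sum_add_distrib, Finset.sum_comm] at hsum
  have hbound : ∑ v : Fin n, ∑ G : SimpleGraph (Fin n),
      weight n p G * Real.exp (t * upDeg G b v) * Real.exp (-(t * a)) ≤
      n * Real.exp (((n : ℝ) - b) * (p * (Real.exp t - 1)) - t * a) := by
    have : ∀ v ∈ (Finset.univ : Finset (Fin n)), ∑ G : SimpleGraph (Fin n),
        weight n p G * Real.exp (t * upDeg G b v) * Real.exp (-(t * a)) ≤
        Real.exp (((n : ℝ) - b) * (p * (Real.exp t - 1)) - t * a) := by
      intro v _
      rw [← Finset.sum_mul, sub_eq_add_neg _ (t * a), Real.exp_add]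
      exact mul_le_mul_of_nonneg_right (sum_weight_mul_exp_le h0 ht b hb v) (Real.exp_pos _).le
    simpa using Finset.sum_le_card_nsmul _ _ _ this
  have hPr : Pr n p Q = ∑ G : SimpleGraph (Fin n), if Q G then weight n p G else 0 := by
    unfold Pr
    congr!
  rw [hPr]
  linarith

/-! ### Conclusion -/

/-- Theorem 3.1.  For every `0 < ε < 10⁻⁶` there exists `C > 0` such
that, whenever `C log n / n ≤ p ≤ 1/25`, a.a.s. there is a subgraph
`H ∈ H^{ε,γ}_{n,p}(G_{n,p})` with `γ = ⌈(3p)⁻¹⌉/n` (so the index shift `γn` is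
`⌈(3p)⁻¹⌉`) such that `G_{n,p} ∖ H` has no matching of size `⌊n/2⌋`. -/
theorem not_shifted_chvatal_resilient_optimal_matching (ε : ℝ) (hε : 0 < ε)
    (hε' : ε < 1/1000000) :
    ∃ C : ℝ, 0 < C ∧ ∀ η : ℝ, 0 < η → ∃ N : ℕ, ∀ n : ℕ, N ≤ n →
      ∀ p : ℝ, C * Real.log n / n ≤ p → p ≤ 1/25 →
        1 - η ≤ Pr n p (fun G =>
          ∃ H : SimpleGraph (Fin n), H ≤ G ∧ ChvatalFamily n p ε ⌈(3 * p)⁻¹⌉₊ H ∧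
            ∀ M : (G \ H).Subgraph, ¬ (M.IsMatching ∧ M.edgeSet.ncard = n / 2)) := by
  refine ⟨40000, by norm_num, fun η hη => ?_⟩
  refine ⟨max 1000 ⌈η⁻¹⌉₊, fun n hn p hpl hpu => ?_⟩
  have hn1 : 1000 ≤ n := (le_max_left _ _).trans hn
  have hnR : (1000 : ℝ) ≤ n := by exact_mod_cast hn1
  have hn0 : (0 : ℝ) < n := by linarith
  have hnη : η⁻¹ ≤ n := (Nat.le_ceil _).trans (by exact_mod_cast (le_max_right _ _).trans hn)
  have hlog : 1 ≤ Real.log n := by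
    rw [Real.le_log_iff_exp_le hn0]
    linarith [Real.exp_one_lt_d9]
  have hnp : 40000 * Real.log n ≤ n * p := by
    rw [div_le_iff₀ hn0] at hpl
    linarith
  have hp : 0 < p := by
    by_contra h
    push Not at h
    nlinarith
  set b := n / 50 with hb
  have hbn : b ≤ n := Nat.div_le_self _ _
  have hbl : (n : ℝ) - b ≤ 0.981 * n := by
    have : n ≤ 50 * b + 49 := by omega
    have : (n : ℝ) ≤ 50 * b + 49 := by exact_mod_cast this
    linarith
  have hbu : (b : ℝ) ≤ n / 50 := by
    have : 50 * b ≤ n := by omega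
    have : (50 : ℝ) * b ≤ n := by exact_mod_cast this
    linarith
  set a : ℝ := (1 - 2 * ε) * (n * p) with ha
  have hnp0 : 0 < n * p := mul_pos hn0 hp
  have ha0 : 0 ≤ a := mul_nonneg (by linarith) hnp0.le
  have hau : a ≤ n * p := by nlinarith
  have hal : 0.999 * (n * p) ≤ a := by
    apply mul_le_mul_of_nonneg_right _ hnp0.le
    linarith
  set s := ⌈(3 * p)⁻¹⌉₊ with hs
  have hsu : (s : ℝ) ≤ (3 * p)⁻¹ + 1 := (Nat.ceil_lt_add_one (by positivity)).le
  have hinv : (3 * p)⁻¹ * p = 1 / 3 := by field_simp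
  have hinv' : (3 * p)⁻¹ ≤ n / 120000 := by
    rw [inv_le_iff_one_le_mul₀ (by positivity)]
    nlinarith
  have hroom : b + (s + 2) * (⌊a⌋₊ + 1) + 1 ≤ n / 2 := by
    have hfl : (⌊a⌋₊ : ℝ) ≤ n * p := (Nat.floor_le ha0).trans hau
    have hmul : ((s : ℝ) + 2) * (⌊a⌋₊ + 1) ≤ ((3 * p)⁻¹ + 3) * (n * p + 1) := by
      apply mul_le_mul <;> linarith
    have hexp : ((3 * p)⁻¹ + 3) * (n * p + 1) = n * (1 / 3) + 3 * (n * p) + (3 * p)⁻¹ + 3 := by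
      rw [← hinv]
      ring
    have hnpu : n * p ≤ n / 25 := by nlinarith
    have : (b : ℝ) + (s + 2) * (⌊a⌋₊ + 1) + 1 ≤ n / 2 := by linarith
    rw [Nat.le_div_iff_mul_le (by norm_num)]
    have h2 : ((b : ℝ) + (s + 2) * (⌊a⌋₊ + 1) + 1) * 2 ≤ n := by linarith
    exact_mod_cast h2
  have hsroom : s + 1 ≤ n / 2 := by nlinarith [Nat.zero_le (⌊a⌋₊ * (s + 2))]
  refine le_trans ?_ (one_sub_le_Pr (t := 0.01) (a := a) hp.le (by linarith) (by norm_num) b hbn _ ?_)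
  · have hexp : Real.exp 0.01 - 1 ≤ 0.010102 := by
      have := Real.exp_bound_div_one_sub_of_interval (x := 0.01) (by norm_num) (by norm_num)
      norm_num at this ⊢
      linarith
    have hexp0 : 0 ≤ p * (Real.exp 0.01 - 1) :=
      mul_nonneg hp.le (by linarith [Real.add_one_le_exp (0.01 : ℝ)])
    -- `0.981 * 0.010102 - 0.01 * 0.999 < -1 / 20000`, and `n * p ≥ 40000 * log n`.
    have hle : ((n : ℝ) - b) * (p * (Real.exp 0.01 - 1)) - 0.01 * a ≤ -2 * Real.log n := by
      have h1 := mul_le_mul_of_nonneg_right hbl hexp0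
      have h2 := mul_le_mul_of_nonneg_left hexp hnp0.le
      nlinarith
    have hlast : n * Real.exp (((n : ℝ) - b) * (p * (Real.exp 0.01 - 1)) - 0.01 * a) ≤ η := by
      calc n * Real.exp (((n : ℝ) - b) * (p * (Real.exp 0.01 - 1)) - 0.01 * a)
          ≤ n * Real.exp (-2 * Real.log n) := by gcongr
        _ = (n : ℝ)⁻¹ := by
            rw [show -2 * Real.log n = -Real.log n + -Real.log n by ring, Real.exp_add,
              Real.exp_neg, Real.exp_log hn0]
            field_simp
        _ ≤ η := inv_le_of_inv_le₀ hη hnη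
    linarith
  · intro G hG
    obtain ⟨H, hHG, hdeg, ⟨Z, hZ, hZ0⟩, hM⟩ :=
      exists_bad_subgraph G b ⌊a⌋₊ (s + 2) (fun v => Nat.le_floor (hG v)) hroom
    refine ⟨H, hHG, chvatal_of_isolated hp.le s H hsroom (fun v => ?_) Z hZ hZ0, hM⟩
    exact (Nat.cast_le.2 (hdeg v)).trans (Nat.floor_le ha0)

end Resilience
end

section
/- For every 0 < ε < 1 there exists C > 0 such that, for p ≥ C log n / n, the binomial random graph G = G_{n,p} asymptotically almost surely satisfies: for every H ∈ H^{ε,ε}_{n,p}(G) and G' := G ∖ H, and for every set X ⊆ V with |X| ≥ n(log n)^{-1/2}, we have |N_{G'}(X)| > (1 − ε²/10) p^{-1} δ_{G'}(X); in particular, |N_{G'}(X)| ≥ εn/2. -/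
/-!
The neighbourhood expansion follows from two properties of `G = G_{n,p}`, collected in
`Typical` with an error parameter `γ = ε³ / 100`: every degree is at least `(n-1)p - γnp`, and
for all `X` with `|X| ≥ n (log n)^{-1/2}` and *all* `Y`, the number of ordered pairs in `X × Y`
spanning an edge is at most `p|X||Y| + γnp|X|`.

*Typical graphs expand* (`Typical.expansion`). In the Chvátal condition with `i = 1`, the
second alternative asks for a degree at most `p - εnp < 0`, so the first one holds and
`Δ(H) ≤ (n-1)p - εnp`. Hence every degree of `G' = G ∖ H` is at least `0.9 εnp`. All
`G'`-edges leaving `X` end in `Y = N_{G'}(X)`, so `|X| δ ≤ p|X||Y| + γnp|X|` where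
`δ = δ_{G'}(X)`. If `p|Y| ≤ (1 - ε²/10) δ`, this gives `(ε²/10) δ ≤ γnp`,
contradicting `δ ≥ 0.9 εnp`. The lower bound `εn/2` follows from `δ ≥ 0.9 εnp`.

*Random graphs are typical* (`typical_prob`). Exponential moments of edge-additive functions
factor over the edges (`sum_weight_exp`), which yields Chernoff bounds `exp(-γ²np/8)` for each
degree and `exp(-γ²np|X|/8)` for each pair `(X, Y)`. With `C = 16/γ²` these are at most `n^{-2}`
and `exp(-4n)`, which beat the `n` vertices and the at most `4^n` pairs.
-/

open Filter Real

namespace Resilience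

variable {V : Type*}

/-! ### Counting edges between two vertex sets -/

open Classical in
/-- The number of ordered pairs in `X × Y` spanning an edge of `G`; an edge inside `X ∩ Y` is
counted twice. -/
noncomputable def pairCount {n : ℕ} (G : SimpleGraph (Fin n)) (X Y : Finset (Fin n)) : ℕ :=
  ((X ×ˢ Y).filter fun q => G.Adj q.1 q.2).card

open Classical in
/-- The contribution (`0`, `1` or `2`) of the unordered pair `e` to `pairCount G X Y`
when `e` is an edge of `G`. -/
noncomputable def mult {n : ℕ} (X Y : Finset (Fin n)) (e : Sym2 (Fin n)) : ℕ :=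
  ((X ×ˢ Y).filter fun q => s(q.1, q.2) = e).card

lemma mult_le_two {n : ℕ} (X Y : Finset (Fin n)) (e : Sym2 (Fin n)) : mult X Y e ≤ 2 := by
  classical
  induction e using Sym2.ind with
  | _ a b =>
    unfold mult
    refine (Finset.card_le_card (t := {(a, b), (b, a)}) ?_).trans Finset.card_le_two
    intro q hq
    simp only [Finset.mem_filter, Sym2.eq_iff] at hq
    simp only [Finset.mem_insert, Finset.mem_singleton, Prod.ext_iff]
    exact hq.2

open Classical in
lemma sum_mult {n : ℕ} (G : SimpleGraph (Fin n)) (X Y : Finset (Fin n)) :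
    ∑ e ∈ G.edgeFinset, mult X Y e = pairCount G X Y := by
  unfold pairCount mult
  rw [Finset.card_eq_sum_card_fiberwise (f := fun q : Fin n × Fin n => s(q.1, q.2))
    (t := G.edgeFinset)]
  · refine Finset.sum_congr rfl fun e he => ?_
    congr 1
    ext q
    simp only [Finset.mem_filter]
    constructor
    · rintro ⟨h1, h2⟩
      refine ⟨⟨h1, ?_⟩, h2⟩
      rw [← h2] at he
      simpa using he
    · rintro ⟨⟨h1, _⟩, h2⟩
      exact ⟨h1, h2⟩
  · intro q hq
    simp at hq ⊢
    exact hq.2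

/-! ### Exponential moments in the binomial random graph -/

open Classical in
/-- The independence of the edges of `G_{n,p}`: exponential moments of edge-additive
functions factor over the possible edges. -/
lemma sum_weight_exp (n : ℕ) (p : ℝ) (f : Sym2 (Fin n) → ℝ) :
    ∑ G : SimpleGraph (Fin n), weight n p G * Real.exp (∑ e ∈ G.edgeFinset, f e) =
      ∏ e ∈ (⊤ : SimpleGraph (Fin n)).edgeFinset, (p * Real.exp (f e) + (1 - p)) := by
  rw [Finset.prod_add]
  refine Finset.sum_bij' (fun G _ => G.edgeFinset)
    (fun t _ => SimpleGraph.fromEdgeSet (t : Set (Sym2 (Fin n)))) ?_ ?_ ?_ ?_ ?_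
  · intro G _
    rw [Finset.mem_powerset]
    exact SimpleGraph.edgeFinset_mono le_top
  · intro t _
    exact Finset.mem_univ _
  · intro G _
    simp
  · intro t ht
    ext e
    rw [Finset.mem_powerset] at ht
    simp only [SimpleGraph.mem_edgeFinset, SimpleGraph.edgeSet_fromEdgeSet, Set.mem_sdiff,
      Finset.mem_coe, and_iff_left_iff_imp]
    intro he
    have := ht he
    rw [SimpleGraph.mem_edgeFinset] at this
    exact SimpleGraph.not_isDiag_of_mem_edgeSet _ this
  · intro G _
    have hsub : G.edgeFinset ⊆ (⊤ : SimpleGraph (Fin n)).edgeFinset :=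
      SimpleGraph.edgeFinset_mono le_top
    have hc : G.edgeSet.ncard = G.edgeFinset.card := by
      rw [← SimpleGraph.coe_edgeFinset, Set.ncard_coe_finset]
    have ht : (⊤ : SimpleGraph (Fin n)).edgeFinset.card = n.choose 2 := by
      have := SimpleGraph.card_edgeFinset_top_eq_card_choose_two (V := Fin n)
      rw [Fintype.card_fin] at this
      rw [← this]
    rw [weight, Finset.prod_mul_distrib, Finset.prod_const, Finset.prod_const,
      Finset.card_sdiff_of_subset hsub, ht, hc, Real.exp_sum]
    ring

/-- The exponential-moment bound behind both Chernoff estimates. Each edge contributes at most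
twice, which is where the factor `2 * t ^ 2` and the range of `t` come from. -/
lemma moment_le {n : ℕ} {p : ℝ} (h0 : 0 ≤ p) (h1 : p ≤ 1) (X Y : Finset (Fin n)) {t : ℝ}
    (ht : |t| ≤ 1 / 2) :
    ∑ G : SimpleGraph (Fin n), weight n p G * Real.exp (t * pairCount G X Y) ≤
      Real.exp (p * (t + 2 * t ^ 2) * pairCount (⊤ : SimpleGraph (Fin n)) X Y) := by
  classical
  have h := sum_weight_exp n p (fun e => t * (mult X Y e : ℝ))
  have e1 : ∀ G : SimpleGraph (Fin n), ∑ e ∈ G.edgeFinset, t * (mult X Y e : ℝ)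
      = t * pairCount G X Y := by
    intro G
    rw [← Finset.mul_sum, ← sum_mult G X Y]
    push_cast
    rfl
  simp only [e1] at h
  have hs : ∑ e ∈ (⊤ : SimpleGraph (Fin n)).edgeFinset, mult X Y e =
      pairCount (⊤ : SimpleGraph (Fin n)) X Y := by
    convert sum_mult (⊤ : SimpleGraph (Fin n)) X Y
  rw [h, ← hs]
  push_cast
  rw [Finset.mul_sum, Real.exp_sum]
  refine Finset.prod_le_prod (fun e _ => ?_) (fun e _ => ?_)
  · have := mul_nonneg h0 (Real.exp_pos (t * (mult X Y e : ℝ))).le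
    linarith
  · have hm : (mult X Y e : ℝ) ≤ 2 := by exact_mod_cast mult_le_two X Y e
    have hm0 : (0 : ℝ) ≤ mult X Y e := Nat.cast_nonneg _
    set m : ℝ := (mult X Y e : ℝ)
    have habs : |t * m| ≤ 1 := by
      rw [abs_mul, abs_of_nonneg hm0]
      nlinarith [abs_nonneg t]
    have hx := (abs_le.1 (Real.abs_exp_sub_one_sub_id_le habs)).2
    have hq : (t * m) ^ 2 ≤ 2 * t ^ 2 * m := by
      have : 0 ≤ t ^ 2 * (m * (2 - m)) :=
        mul_nonneg (sq_nonneg t) (mul_nonneg hm0 (by linarith))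
      nlinarith
    have h3 : p * (Real.exp (t * m) - 1) ≤ p * ((t + 2 * t ^ 2) * m) :=
      mul_le_mul_of_nonneg_left (by linarith) h0
    have h4 := Real.add_one_le_exp (p * (t + 2 * t ^ 2) * m)
    linarith

lemma pairCount_le {n : ℕ} (G : SimpleGraph (Fin n)) (X Y : Finset (Fin n)) :
    pairCount G X Y ≤ X.card * Y.card := by
  classical
  unfold pairCount
  exact (Finset.card_filter_le _ _).trans (Finset.card_product X Y).le

open Classical in
lemma pairCount_eq_sum {n : ℕ} (G : SimpleGraph (Fin n)) (X Y : Finset (Fin n)) :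
    pairCount G X Y = ∑ x ∈ X, (Y.filter fun y => G.Adj x y).card := by
  unfold pairCount
  rw [Finset.card_filter, Finset.sum_product]
  simp only [Finset.card_filter]

lemma pairCount_singleton {n : ℕ} (G : SimpleGraph (Fin n)) (v : Fin n) :
    pairCount G {v} Finset.univ = deg G v := by
  classical
  rw [pairCount_eq_sum, Finset.sum_singleton, deg, ← Set.ncard_coe_finset]
  congr 1
  ext y
  simp

lemma pairCount_top_singleton {n : ℕ} (v : Fin n) :
    (pairCount (⊤ : SimpleGraph (Fin n)) {v} Finset.univ : ℝ) = (n : ℝ) - 1 := by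
  classical
  have h : pairCount (⊤ : SimpleGraph (Fin n)) {v} Finset.univ =
      (Finset.univ.erase v).card := by
    rw [pairCount_eq_sum, Finset.sum_singleton]
    congr 1
    ext y
    simp [eq_comm]
  rw [h, Finset.card_erase_of_mem (Finset.mem_univ _),
    Finset.card_univ, Fintype.card_fin, Nat.cast_sub (by have := v.2; omega)]
  simp

/-! ### Chernoff bounds -/

/-- Upper tail of `pairCount`, in exponential-moment form. -/
lemma upper_tail {n : ℕ} {p γ : ℝ} (h0 : 0 ≤ p) (h1 : p ≤ 1) (hγ : 0 < γ) (hγ1 : γ ≤ 1)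
    (X Y : Finset (Fin n)) :
    ∑ G : SimpleGraph (Fin n), weight n p G * Real.exp (γ / 4 *
        (pairCount G X Y - (p * X.card * Y.card + γ * p * n * X.card))) ≤
      Real.exp (-(γ ^ 2 / 8 * (p * n) * X.card)) := by
  have hm := moment_le h0 h1 X Y (t := γ / 4) (by rw [abs_of_pos (by positivity)]; linarith)
  have e : ∀ G : SimpleGraph (Fin n), weight n p G * Real.exp (γ / 4 *
        (pairCount G X Y - (p * X.card * Y.card + γ * p * n * X.card))) =
      weight n p G * Real.exp (γ / 4 * pairCount G X Y) *
        Real.exp (-(γ / 4 * (p * X.card * Y.card + γ * p * n * X.card))) := by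
    intro G
    rw [mul_assoc (weight n p G), ← Real.exp_add]
    congr 2
    ring
  simp only [e]
  rw [← Finset.sum_mul]
  refine (mul_le_mul_of_nonneg_right hm (Real.exp_pos _).le).trans ?_
  rw [← Real.exp_add, Real.exp_le_exp]
  have hM : (pairCount (⊤ : SimpleGraph (Fin n)) X Y : ℝ) ≤ X.card * Y.card := by
    exact_mod_cast pairCount_le _ X Y
  have hY : (Y.card : ℝ) ≤ n := by
    have := Finset.card_le_univ Y
    rw [Fintype.card_fin] at this
    exact_mod_cast this
  have hXY : (X.card : ℝ) * Y.card ≤ X.card * n :=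
    mul_le_mul_of_nonneg_left hY (Nat.cast_nonneg _)
  have a1 : p * (γ / 4 + 2 * (γ / 4) ^ 2) * (pairCount (⊤ : SimpleGraph (Fin n)) X Y : ℝ) ≤
      p * (γ / 4 + 2 * (γ / 4) ^ 2) * (X.card * Y.card) :=
    mul_le_mul_of_nonneg_left hM (by positivity)
  have a2 : p * (2 * (γ / 4) ^ 2) * ((X.card : ℝ) * Y.card) ≤
      p * (2 * (γ / 4) ^ 2) * (X.card * n) :=
    mul_le_mul_of_nonneg_left hXY (by positivity)
  linarith

/-- Lower tail of a vertex degree, in exponential-moment form. -/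
lemma lower_tail {n : ℕ} {p γ : ℝ} (h0 : 0 ≤ p) (h1 : p ≤ 1) (hγ : 0 < γ) (hγ1 : γ ≤ 1)
    (v : Fin n) :
    ∑ G : SimpleGraph (Fin n), weight n p G * Real.exp (γ / 4 *
        ((((n : ℝ) - 1) * p - γ * p * n) - deg G v)) ≤
      Real.exp (-(γ ^ 2 / 8 * (p * n))) := by
  have hm := moment_le h0 h1 {v} Finset.univ (t := -(γ / 4))
    (by rw [abs_neg, abs_of_pos (by positivity)]; linarith)
  rw [pairCount_top_singleton] at hm
  simp only [pairCount_singleton] at hm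
  have e : ∀ G : SimpleGraph (Fin n), weight n p G * Real.exp (γ / 4 *
        ((((n : ℝ) - 1) * p - γ * p * n) - deg G v)) =
      weight n p G * Real.exp (-(γ / 4) * deg G v) *
        Real.exp (γ / 4 * (((n : ℝ) - 1) * p - γ * p * n)) := by
    intro G
    rw [mul_assoc (weight n p G), ← Real.exp_add]
    congr 2
    ring
  simp only [e]
  rw [← Finset.sum_mul]
  refine (mul_le_mul_of_nonneg_right hm (Real.exp_pos _).le).trans ?_
  rw [← Real.exp_add, Real.exp_le_exp]
  have : 0 ≤ p * γ ^ 2 := by positivity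
  nlinarith

/-! ### Expansion in typical graphs -/

/-- The property of `G` used in the argument: no vertex has degree far below
average, and no large set `X` sends too many edges to any set `Y`. -/
def Typical (n : ℕ) (p γ : ℝ) (G : SimpleGraph (Fin n)) : Prop :=
  (∀ v, ((n : ℝ) - 1) * p - γ * p * n ≤ deg G v) ∧
  ∀ X Y : Finset (Fin n), (n : ℝ) * Real.log n ^ (-(1/2) : ℝ) ≤ X.card →
    (pairCount G X Y : ℝ) ≤ p * X.card * Y.card + γ * p * n * X.card

/-- The deterministic part: the first rank of the Chvátal condition bounds the maximum degree
of `H`, and a double count of the edges leaving `X` does the rest. -/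
lemma Typical.expansion {n : ℕ} {p ε : ℝ} (hε : 0 < ε) (hε1 : ε < 1) (hp : 0 < p)
    (hn3 : 3 ≤ n) (hn : 1 < ε * n) {G : SimpleGraph (Fin n)}
    (hG : Typical n p (ε ^ 3 / 100) G) {H : SimpleGraph (Fin n)} {s : ℕ}
    (hH : ChvatalFamily n p ε s H) (X : Set (Fin n)) (hX0 : X.Nonempty)
    (hX : (n : ℝ) * Real.log n ^ (-(1/2) : ℝ) ≤ X.ncard) :
    (1 - ε^2/10) * p⁻¹ * (minDeg (G \ H) X) < ((nbhd (G \ H) X).ncard : ℝ) ∧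
      ε * n / 2 ≤ ((nbhd (G \ H) X).ncard : ℝ) := by
  classical
  obtain ⟨hdeg, hpair⟩ := hG
  obtain ⟨v, hv, hmono, hchv⟩ := hH
  have hn3' : (3 : ℝ) ≤ n := by exact_mod_cast hn3
  have hn0 : (0 : ℝ) < n := by linarith
  have hpn : 0 < p * n := mul_pos hp hn0
  have hmax : ∀ u, (deg H u : ℝ) ≤ ((n : ℝ) - 1) * p - ε * n * p := by
    intro u
    obtain ⟨j, rfl⟩ := hv.2 u
    have h0 : (deg H (v j) : ℝ) ≤ deg H (v ⟨0, by omega⟩) := by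
      exact_mod_cast hmono ⟨0, by omega⟩ j (Fin.mk_le_of_le_val (Nat.zero_le _))
    refine h0.trans ?_
    rcases hchv ⟨0, by omega⟩ (by simp; linarith) with h | h
    · simpa using h
    · -- The second alternative would force a negative degree.
      exfalso
      simp only [Nat.cast_zero, zero_add, one_mul] at h
      have := (Nat.cast_nonneg _).trans h
      nlinarith
  have hsplit : ∀ u, (deg G u : ℝ) ≤ deg (G \ H) u + deg H u := by
    intro u
    have : deg G u ≤ deg (G \ H) u + deg H u := by
      unfold deg
      refine (Set.ncard_le_ncard ?_ (Set.toFinite _)).trans (Set.ncard_union_le _ _)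
      intro w hw
      by_cases h : H.Adj u w
      · exact Or.inr h
      · exact Or.inl ⟨hw, h⟩
    exact_mod_cast this
  have hlow : ∀ u, 9 / 10 * ε * (p * n) ≤ deg (G \ H) u := by
    intro u
    have h1 := hdeg u
    have h2 := hmax u
    have h3 := hsplit u
    have h4 : ε ^ 3 / 100 ≤ ε / 10 := by
      have : ε ^ 3 ≤ ε := by
        simpa using pow_le_pow_of_le_one hε.le hε1.le (show 1 ≤ 3 by norm_num)
      linarith
    have h5 := mul_le_mul_of_nonneg_right h4 hpn.le
    linarith
  set d := minDeg (G \ H) X with hd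
  have hdlow : 9 / 10 * ε * (p * n) ≤ d := by
    obtain ⟨u, -, hu⟩ := Nat.sInf_mem (hX0.image fun v => deg (G \ H) v)
    have : d = deg (G \ H) u := hu.symm
    rw [this]
    exact hlow u
  set N := nbhd (G \ H) X with hN
  have hXc : X.toFinset.card = X.ncard := (Set.ncard_eq_toFinset_card' X).symm
  have hNc : N.toFinset.card = N.ncard := (Set.ncard_eq_toFinset_card' N).symm
  have hcount : X.ncard * d ≤ pairCount G X.toFinset N.toFinset := by
    rw [pairCount_eq_sum, ← hXc, ← smul_eq_mul]
    refine Finset.card_nsmul_le_sum _ _ _ fun x hx => ?_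
    rw [Set.mem_toFinset] at hx
    have h1 : d ≤ deg (G \ H) x := Nat.sInf_le ⟨x, hx, rfl⟩
    refine h1.trans ?_
    unfold deg
    rw [← Set.ncard_coe_finset]
    refine Set.ncard_le_ncard ?_ (Set.toFinite _)
    intro y hy
    simp only [Finset.coe_filter, Set.mem_toFinset, Set.mem_ofPred_eq]
    exact ⟨⟨x, hx, hy.symm⟩, hy.1⟩
  have hXpos : (0 : ℝ) < X.ncard := by
    exact_mod_cast (Set.ncard_pos (Set.toFinite _)).2 hX0
  have hup := hpair X.toFinset N.toFinset (by rw [hXc]; exact hX)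
  rw [hXc, hNc] at hup
  have hcount' : (X.ncard : ℝ) * d ≤ pairCount G X.toFinset N.toFinset := by
    exact_mod_cast hcount
  have hkey : (d : ℝ) ≤ p * N.ncard + ε ^ 3 / 100 * (p * n) := by
    refine le_of_mul_le_mul_left ?_ hXpos
    linarith
  have hε3 : 0 < ε ^ 3 * (p * n) := by positivity
  have first : (1 - ε^2/10) * p⁻¹ * d < (N.ncard : ℝ) := by
    by_contra! hcon
    have h1 := mul_le_mul_of_nonneg_left hcon hp.le
    have h2 : p * ((1 - ε^2/10) * p⁻¹ * d) = (1 - ε^2/10) * d := by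
      field_simp
    have h3 := mul_le_mul_of_nonneg_left hdlow (sq_nonneg ε)
    nlinarith
  refine ⟨first, ?_⟩
  have h1 : (9 / 10 : ℝ) ≤ 1 - ε ^ 2 / 10 := by nlinarith
  have h2 : 9 / 10 * ε * n ≤ p⁻¹ * d := by
    rw [inv_mul_eq_div, le_div_iff₀ hp]
    linarith
  have h3 : (9 / 10 : ℝ) * (9 / 10 * ε * n) ≤ (1 - ε ^ 2 / 10) * (p⁻¹ * d) :=
    mul_le_mul h1 h2 (by positivity) (by linarith)
  rw [mul_assoc] at first
  have : 0 < ε * n := by positivity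
  linarith

/-! ### Random graphs are typical -/

/-- Union bound over all vertices and all pairs of vertex sets. -/
lemma typical_prob {n : ℕ} {p γ : ℝ} (hγ : 0 < γ) (hγ1 : γ ≤ 1) (hn : 1 ≤ n)
    (hlog : 4 ≤ Real.log n) (hp : 16 / γ ^ 2 * Real.log n / n ≤ p) (h1 : p ≤ 1)
    (Q : SimpleGraph (Fin n) → Prop) (hQ : ∀ G, Typical n p γ G → Q G) :
    1 - 2 / n ≤ Pr n p Q := by
  classical
  have hn0 : (0 : ℝ) < n := by exact_mod_cast hn
  have hp0 : 0 ≤ p := le_trans (by positivity) hp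
  have hpn : 2 * Real.log n ≤ γ ^ 2 / 8 * (p * n) := by
    rw [div_le_iff₀ hn0] at hp
    have := mul_le_mul_of_nonneg_left hp (show 0 ≤ γ ^ 2 / 8 by positivity)
    have e : γ ^ 2 / 8 * (16 / γ ^ 2 * Real.log n) = 2 * Real.log n := by
      field_simp
      norm_num
    linarith
  set L : Finset (Finset (Fin n)) :=
    Finset.univ.filter fun X => (n : ℝ) * Real.log n ^ (-(1/2) : ℝ) ≤ X.card with hL
  set a : SimpleGraph (Fin n) → Fin n → ℝ := fun G v => Real.exp (γ / 4 *
        ((((n : ℝ) - 1) * p - γ * p * n) - deg G v)) with ha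
  set b : SimpleGraph (Fin n) → Finset (Fin n) → Finset (Fin n) → ℝ := fun G X Y =>
    Real.exp (γ / 4 *
        (pairCount G X Y - (p * X.card * Y.card + γ * p * n * X.card))) with hb
  have ha0 : ∀ G v, 0 ≤ a G v := fun G v => (Real.exp_pos _).le
  have hb0 : ∀ G X Y, 0 ≤ b G X Y := fun G X Y => (Real.exp_pos _).le
  have hs0 : ∀ G, 0 ≤ ∑ v, a G v := fun G => Finset.sum_nonneg fun v _ => ha0 G v
  have ht0 : ∀ G, 0 ≤ ∑ X ∈ L, ∑ Y, b G X Y := fun G =>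
    Finset.sum_nonneg fun X _ => Finset.sum_nonneg fun Y _ => hb0 G X Y
  -- Pointwise Markov: a graph that is not typical makes one of the exponentials at least `1`.
  have hpt : ∀ G, weight n p G - (weight n p G * ∑ v, a G v +
      weight n p G * ∑ X ∈ L, ∑ Y, b G X Y) ≤ if Q G then weight n p G else 0 := by
    intro G
    have hw := weight_nonneg hp0 h1 G
    have m1 := mul_nonneg hw (hs0 G)
    have m2 := mul_nonneg hw (ht0 G)
    split_ifs with hq
    · linarith
    · have hT : ¬ Typical n p γ G := fun h => hq (hQ G h)
      have : 1 ≤ ∑ v, a G v + ∑ X ∈ L, ∑ Y, b G X Y := by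
        rw [Typical, not_and_or] at hT
        rcases hT with h | h
        · push Not at h
          obtain ⟨v, hv⟩ := h
          have h1 : 1 ≤ a G v :=
            Real.one_le_exp (mul_nonneg (by positivity) (by linarith))
          have h2 : a G v ≤ ∑ v, a G v :=
            Finset.single_le_sum (fun v _ => ha0 G v) (Finset.mem_univ v)
          linarith [ht0 G]
        · push Not at h
          obtain ⟨X, Y, hX, hXY⟩ := h
          have h1 : 1 ≤ b G X Y :=
            Real.one_le_exp (mul_nonneg (by positivity) (by linarith))
          have h2 : b G X Y ≤ ∑ Y, b G X Y :=
            Finset.single_le_sum (fun Y _ => hb0 G X Y) (Finset.mem_univ Y)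
          have h3 : ∑ Y, b G X Y ≤ ∑ X ∈ L, ∑ Y, b G X Y :=
            Finset.single_le_sum (f := fun X => ∑ Y, b G X Y)
              (fun X _ => Finset.sum_nonneg fun Y _ => hb0 G X Y)
              (Finset.mem_filter.2 ⟨Finset.mem_univ X, hX⟩)
          linarith [hs0 G]
      nlinarith
  have hsum := Finset.sum_le_sum fun G (_ : G ∈ Finset.univ) => hpt G
  rw [Finset.sum_sub_distrib, Finset.sum_add_distrib, sum_weight] at hsum
  have hA : ∑ G, weight n p G * ∑ v, a G v ≤ 1 / n := by
    simp only [Finset.mul_sum]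
    rw [Finset.sum_comm]
    calc _ ≤ ∑ v : Fin n, Real.exp (-(2 * Real.log n)) := by
          refine Finset.sum_le_sum fun v _ => (lower_tail hp0 h1 hγ hγ1 v).trans ?_
          rw [Real.exp_le_exp]
          linarith
      _ = 1 / n := by
          rw [Finset.sum_const, Finset.card_univ, Fintype.card_fin, nsmul_eq_mul, two_mul,
            neg_add, Real.exp_add, Real.exp_neg, Real.exp_log hn0]
          field_simp
  have hB : ∑ G, weight n p G * ∑ X ∈ L, ∑ Y, b G X Y ≤ 1 / n := by
    simp only [Finset.mul_sum]
    rw [Finset.sum_comm]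
    have hterm : ∀ X ∈ L, ∑ G, ∑ Y, weight n p G * b G X Y ≤
        (2 : ℝ) ^ n * Real.exp (-(4 * n)) := by
      intro X hX
      rw [Finset.sum_comm]
      have hX' := (Finset.mem_filter.1 hX).2
      have hbig : 4 * (n : ℝ) ≤ γ ^ 2 / 8 * (p * n) * X.card := by
        have hl : 2 ≤ Real.log n ^ (1/2 : ℝ) := by
          rw [← Real.sqrt_eq_rpow]
          exact Real.le_sqrt_of_sq_le (by linarith)
        have h2 : Real.log n * Real.log n ^ (-(1/2) : ℝ) = Real.log n ^ (1/2 : ℝ) := by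
          rw [← Real.rpow_one_add' (by linarith) (by norm_num)]
          norm_num
        calc 4 * (n : ℝ) ≤ 2 * n * Real.log n ^ (1/2 : ℝ) := by nlinarith
          _ = 2 * Real.log n * (n * Real.log n ^ (-(1/2) : ℝ)) := by rw [← h2]; ring
          _ ≤ γ ^ 2 / 8 * (p * n) * X.card :=
            mul_le_mul hpn hX' (by positivity) (by positivity)
      calc _ ≤ ∑ Y : Finset (Fin n), Real.exp (-(4 * (n : ℝ))) := by
            refine Finset.sum_le_sum fun Y _ => (upper_tail hp0 h1 hγ hγ1 X Y).trans ?_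
            rw [Real.exp_le_exp]
            linarith
        _ = _ := by
            rw [Finset.sum_const, Finset.card_univ, Fintype.card_finset, Fintype.card_fin,
              nsmul_eq_mul]
            push_cast
            rfl
    have hcard : (L.card : ℝ) ≤ 2 ^ n := by
      have := Finset.card_le_univ L
      rw [Fintype.card_finset, Fintype.card_fin] at this
      exact_mod_cast this
    have he2 : (2 : ℝ) ^ n ≤ Real.exp n := by
      have : (2 : ℝ) ≤ Real.exp 1 := by
        have := Real.add_one_le_exp (1 : ℝ)
        linarith
      calc (2 : ℝ) ^ n ≤ Real.exp 1 ^ n := pow_le_pow_left₀ (by norm_num) this n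
        _ = Real.exp n := by rw [← Real.exp_nat_mul, mul_one]
    calc _ ≤ ∑ X ∈ L, (2 : ℝ) ^ n * Real.exp (-(4 * n)) := Finset.sum_le_sum hterm
      _ = L.card * ((2 : ℝ) ^ n * Real.exp (-(4 * n))) := by
          rw [Finset.sum_const, nsmul_eq_mul]
      _ ≤ Real.exp n * (Real.exp n * Real.exp (-(4 * n))) := by
          refine mul_le_mul (hcard.trans he2) ?_ (by positivity) (by positivity)
          exact mul_le_mul_of_nonneg_right he2 (Real.exp_pos _).le
      _ = Real.exp (-(2 * n)) := by
          rw [← Real.exp_add, ← Real.exp_add]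
          congr 1
          ring
      _ ≤ 1 / n := by
          rw [Real.exp_neg, ← one_div]
          refine one_div_le_one_div_of_le hn0 ?_
          have := Real.add_one_le_exp (2 * (n : ℝ))
          linarith
  have e : (2 : ℝ) / n = 1 / n + 1 / n := by ring
  rw [e]
  unfold Pr
  exact (sub_le_sub_left (add_le_add hA hB) 1).trans (by convert hsum)

/-- Proposition 2.5(ii).  For every `0 < ε < 1` there exists `C > 0`
such that, for `p ≥ C log n / n`, a.a.s. for every `H ∈ H^{ε,ε}_{n,p}(G)` and every
`X ⊆ V` with `|X| ≥ n (log n)^{-1/2}` we have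
`|N_{G∖H}(X)| > (1 - ε²/10) p⁻¹ δ_{G∖H}(X)`; in particular `|N_{G∖H}(X)| ≥ εn/2`. -/
theorem neighbourhood_expansion_large (ε : ℝ) (hε : 0 < ε) (hε1 : ε < 1) :
    ∃ C : ℝ, 0 < C ∧ ∀ η : ℝ, 0 < η → ∃ N : ℕ, ∀ n : ℕ, N ≤ n →
      ∀ p : ℝ, C * Real.log n / n ≤ p → p ≤ 1 →
        1 - η ≤ Pr n p (fun G =>
          ∀ H : SimpleGraph (Fin n), H ≤ G → ChvatalFamily n p ε ⌈ε * n⌉₊ H →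
            ∀ X : Set (Fin n), (n : ℝ) * Real.log n ^ (-(1/2) : ℝ) ≤ X.ncard →
              (1 - ε^2/10) * p⁻¹ * (minDeg (G \ H) X) < ((nbhd (G \ H) X).ncard : ℝ) ∧
              ε * n / 2 ≤ ((nbhd (G \ H) X).ncard : ℝ)) := by
  have hγ : 0 < ε ^ 3 / 100 := by positivity
  have hγ1 : ε ^ 3 / 100 ≤ 1 := by
    have := pow_le_one₀ hε.le hε1.le (n := 3)
    linarith
  refine ⟨16 / (ε ^ 3 / 100) ^ 2, by positivity, fun η hη => ?_⟩
  have hcast := tendsto_natCast_atTop_atTop (R := ℝ)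
  have hev : ∀ᶠ n : ℕ in atTop, 3 ≤ n ∧ 4 ≤ Real.log n ∧ 1 / ε < n ∧ 2 / η ≤ n :=
    (eventually_ge_atTop 3).and
      (((Real.tendsto_log_atTop.comp hcast).eventually_ge_atTop 4).and
        ((hcast.eventually_gt_atTop (1 / ε)).and (hcast.eventually_ge_atTop (2 / η))))
  obtain ⟨N, hN⟩ := eventually_atTop.1 hev
  refine ⟨N, fun n hn p hp hp1 => ?_⟩
  obtain ⟨h3, hlog, hnε, hnη⟩ := hN n hn
  have hn0 : (0 : ℝ) < n := by
    have : 0 < n := by omega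
    exact_mod_cast this
  have hl0 : 0 < Real.log n := by linarith
  have hp0 : 0 < p := lt_of_lt_of_le (by positivity) hp
  have h2 : 2 / (n : ℝ) ≤ η := by
    rw [div_le_iff₀ hη] at hnη
    rw [div_le_iff₀ hn0]
    linarith
  refine (sub_le_sub_left h2 1).trans
    (typical_prob hγ hγ1 (by omega) hlog hp hp1 _ fun G hG H _ hH X hX => ?_)
  have hX0 : X.Nonempty := by
    rw [← Set.ncard_pos (Set.toFinite _)]
    have : (0 : ℝ) < X.ncard := lt_of_lt_of_le (by positivity) hX
    exact_mod_cast this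
  refine hG.expansion hε hε1 hp0 h3 ?_ hH X hX0 hX
  rw [div_lt_iff₀ hε] at hnε
  linarith

end Resilience
end
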